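/- Under the non-stationary zero-returns model with mixing, and with the kernel estimators defined from a kernel and bandwidth satisfying the kernel and bandwidth assumption, if there exists h ∈ {1,…,m} such that Δ_h ≠ 0, then the index κ̂_m = Σ_{h=1}^m Δ̂_h² converges in probability, as n → ∞, to the strictly positive constant C = Σ_{h=1}^m Δ_h² > 0. -/

import Mathlib

open MeasureTheory ProbabilityTheory Filter Set

namespace ZeroReturnsNS

variable {Ω : Type*} [MeasurableSpace Ω]

/-- A function is piecewise Lipschitz on `(0,1]` if `(0,1]` is a finite disjoint union of
intervals on each of which the function is Lipschitz. -/
def PiecewiseLipschitzOn01 (f : ℝ → ℝ) : Prop :=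
  ∃ (p : ℕ) (I : Fin p → Set ℝ) (C : Fin p → NNReal),
    (∀ l, (I l).OrdConnected) ∧
    Pairwise (Function.onFun Disjoint I) ∧
    (⋃ l, I l) = Set.Ioc (0 : ℝ) 1 ∧
    ∀ l, LipschitzOnWith (C l) f (I l)

/-- The triangular array of returns `r_t = v(t/n) ε_t`. -/
noncomputable def rproc (v : ℝ → ℝ) (ε : ℕ → ℕ → Ω → ℝ) (n t : ℕ) (ω : Ω) : ℝ :=
  v ((t : ℝ) / n) * ε n t ω

/-- The zero-return indicator `a_t = 1_{r_t ≠ 0}`. -/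
noncomputable def aproc (v : ℝ → ℝ) (ε : ℕ → ℕ → Ω → ℝ) (n t : ℕ) (ω : Ω) : ℝ :=
  if rproc v ε n t ω ≠ 0 then 1 else 0

/-- The σ-field `σ(ε_u : u ≤ t)` of the past of the `n`-th row of the array. -/
noncomputable def pastField (ε : ℕ → ℕ → Ω → ℝ) (n t : ℕ) : MeasurableSpace Ω :=
  ⨆ u ∈ {u : ℕ | u ≤ t}, MeasurableSpace.comap (ε n u) inferInstance

/-- The σ-field `σ(ε_u : u ≥ t)` of the future of the `n`-th row of the array. -/
noncomputable def futureField (ε : ℕ → ℕ → Ω → ℝ) (n t : ℕ) : MeasurableSpace Ω :=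
  ⨆ u ∈ {u : ℕ | t ≤ u}, MeasurableSpace.comap (ε n u) inferInstance

/-- The strong (α-)mixing coefficients of `(ε_t)`:
`α_ε(h) = sup { |P(A∩B) - P(A)P(B)| : A ∈ σ(ε_u : u ≤ t), B ∈ σ(ε_u : u ≥ t+h) }`. -/
noncomputable def alphaMix (μ : Measure Ω) (ε : ℕ → ℕ → Ω → ℝ) (h : ℕ) : ℝ :=
  ⨆ n : ℕ, ⨆ t : ℕ, sSup {x : ℝ | ∃ A B : Set Ω,
    MeasurableSet[pastField ε n t] A ∧ MeasurableSet[futureField ε n (t + h)] B ∧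
    x = |(μ (A ∩ B)).toReal - (μ A).toReal * (μ B).toReal|}

/-- `K_{ti} = K((t-i)/(nb))` for `t ≠ i`, and `K_{tt} = 0`. -/
noncomputable def Kw (K : ℝ → ℝ) (b : ℕ → ℝ) (n t i : ℕ) : ℝ :=
  if t = i then 0 else K (((t : ℝ) - (i : ℝ)) / ((n : ℝ) * b n))

/-- The kernel weights `w_{tj}(b) = K_{tj} / Σ_{i=1}^n K_{ti}`. -/
noncomputable def wgt (K : ℝ → ℝ) (b : ℕ → ℝ) (n t j : ℕ) : ℝ :=
  Kw K b n t j / ∑ i ∈ Finset.Icc 1 n, Kw K b n t i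

/-- The kernel estimator `p̂_t = Σ_{j=1}^n w_{tj}(b) a_j` of `P(a_t = 1)`. -/
noncomputable def phat (v : ℝ → ℝ) (ε : ℕ → ℕ → Ω → ℝ) (K : ℝ → ℝ) (b : ℕ → ℝ)
    (n t : ℕ) (ω : Ω) : ℝ :=
  ∑ j ∈ Finset.Icc 1 n, wgt K b n t j * aproc v ε n j ω

/-- The kernel estimator `p̂_{t,t-h} = Σ_{j=1+h}^n w_{tj}(b) a_j a_{j-h}` of
`P(a_t a_{t-h} = 1)`. -/
noncomputable def phat2 (v : ℝ → ℝ) (ε : ℕ → ℕ → Ω → ℝ) (K : ℝ → ℝ) (b : ℕ → ℝ)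
    (n h t : ℕ) (ω : Ω) : ℝ :=
  ∑ j ∈ Finset.Icc (h + 1) n, wgt K b n t j * (aproc v ε n j ω * aproc v ε n (j - h) ω)

/-- `γ̂_{ar²}(h) = (n-h)⁻¹ Σ_{t=1+h}^n r_t² p̂_{t,t-h}/p̂_t`
(terms with `p̂_t = 0` are set to zero). -/
noncomputable def gammaAr2 (v : ℝ → ℝ) (ε : ℕ → ℕ → Ω → ℝ) (K : ℝ → ℝ) (b : ℕ → ℝ)
    (n h : ℕ) (ω : Ω) : ℝ :=
  ((n : ℝ) - (h : ℝ))⁻¹ * ∑ t ∈ Finset.Icc (h + 1) n, (rproc v ε n t ω) ^ 2 *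
    (if phat v ε K b n t ω = 0 then 0 else phat2 v ε K b n h t ω / phat v ε K b n t ω)

/-- `γ̂_0(h) = n⁻¹ Σ_{t=1+h}^n r_t r_{t-h}`. -/
noncomputable def gammaHat0 (v : ℝ → ℝ) (ε : ℕ → ℕ → Ω → ℝ) (n h : ℕ) (ω : Ω) : ℝ :=
  (n : ℝ)⁻¹ * ∑ t ∈ Finset.Icc (h + 1) n, rproc v ε n t ω * rproc v ε n (t - h) ω

/-- `γ̂_a(h) = n⁻¹ Σ_{t=1+h}^n a_t a_{t-h}`. -/
noncomputable def gammaHatA (v : ℝ → ℝ) (ε : ℕ → ℕ → Ω → ℝ) (n h : ℕ) (ω : Ω) : ℝ :=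
  (n : ℝ)⁻¹ * ∑ t ∈ Finset.Icc (h + 1) n, aproc v ε n t ω * aproc v ε n (t - h) ω

/-- `ρ̂_0(h) = γ̂_0(h)/γ̂_0(0)`. -/
noncomputable def rhoHat0 (v : ℝ → ℝ) (ε : ℕ → ℕ → Ω → ℝ) (n h : ℕ) (ω : Ω) : ℝ :=
  gammaHat0 v ε n h ω / gammaHat0 v ε n 0 ω

/-- `ρ̂_vpr(h) = (γ̂_0(0)/γ̂_{ar²}(h)) ρ̂_0(h)`. -/
noncomputable def rhoHatVpr (v : ℝ → ℝ) (ε : ℕ → ℕ → Ω → ℝ) (K : ℝ → ℝ) (b : ℕ → ℝ)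
    (n h : ℕ) (ω : Ω) : ℝ :=
  (gammaHat0 v ε n 0 ω / gammaAr2 v ε K b n h ω) * rhoHat0 v ε n h ω

/-- `ρ̂_pr(h) = ρ̂_0(h) γ̂_a(0)/γ̂_a(h)`. -/
noncomputable def rhoHatPr (v : ℝ → ℝ) (ε : ℕ → ℕ → Ω → ℝ) (n h : ℕ) (ω : Ω) : ℝ :=
  rhoHat0 v ε n h ω * (gammaHatA v ε n 0 ω / gammaHatA v ε n h ω)

end ZeroReturnsNS

namespace ZeroReturnsNS

/-- The empirical index component `Δ̂_h`. -/
noncomputable def DeltaHat (v : ℝ → ℝ) (ε : ℕ → ℕ → Ω → ℝ) (K : ℝ → ℝ) (b : ℕ → ℝ)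
    (n h : ℕ) (ω : Ω) : ℝ :=
  ((n : ℝ)⁻¹ * ∑ t ∈ Finset.Icc 1 n, (rproc v ε n t ω) ^ 2) / gammaAr2 v ε K b n h ω
    - ((n : ℝ)⁻¹ * ∑ t ∈ Finset.Icc 1 n, aproc v ε n t ω)
      / (((n : ℝ) - (h : ℝ))⁻¹ *
          ∑ t ∈ Finset.Icc (h + 1) n, aproc v ε n t ω * aproc v ε n (t - h) ω)

/-- The population index component
`Δ_h = (∫₀¹ v² g_0)/(∫₀¹ v² g_h) − (∫₀¹ g_0)/(∫₀¹ g_h)`. -/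
noncomputable def Delta (v : ℝ → ℝ) (g : ℕ → ℝ → ℝ) (h : ℕ) : ℝ :=
  (∫ s in Set.Ioc (0 : ℝ) 1, (v s) ^ 2 * g 0 s) /
      (∫ s in Set.Ioc (0 : ℝ) 1, (v s) ^ 2 * g h s)
    - (∫ s in Set.Ioc (0 : ℝ) 1, g 0 s) / (∫ s in Set.Ioc (0 : ℝ) 1, g h s)

/-!
An average over the grid points `t / n` is the integral over `(0, 1]` of the step function
`u ↦ x n ⌈n u⌉`, so bounded convergence gives its limit as soon as the summands converge at almost
every `u`. This applies to means, which are sampled from almost everywhere continuous functions,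
and also to `E|q n ⌈n u⌉|` for bounded random `q`.

Bounded functions of finitely many consecutive `ε`'s have summable covariances, so the variance of
a weighted sum of them is at most a constant times the largest weight. That weight is `1 / n` for
averages and of order `1 / (n b)` for kernel weights; truncation extends the law of large numbers
from bounded to uniformly integrable summands. Consequently `p̂_{t,t-h} / p̂_t` at `t = ⌈n u⌉` tends
to `g_h(u) / g_0(u)` for almost every `u`, and uniform integrability of the squared returns allows
it to be replaced by this limit in the denominator of `Δ̂_h`.
-/

section Averages

/-- The average `(n - k)⁻¹ ∑_{t = k + 1}^n x t` of a sequence whose first `k` terms are trimmed.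
The difference `n - k` is taken in `ℝ`; the sum is empty, hence the average `0`, when `n ≤ k`. -/
noncomputable def trimmedAverage (k n : ℕ) (x : ℕ → ℝ) : ℝ :=
  ((n : ℝ) - k)⁻¹ * ∑ t ∈ Finset.Icc (k + 1) n, x t

/-- Continuity at almost every point of `(0, 1]`, the regularity of the coefficient functions that
is needed to pass from grid points to the limit. -/
def AEContinuous01 (F : ℝ → ℝ) : Prop :=
  ∀ᵐ u ∂volume.restrict (Ioc (0 : ℝ) 1), ContinuousAt F u

lemma PiecewiseLipschitzOn01.aeContinuous01 {f : ℝ → ℝ} (hf : PiecewiseLipschitzOn01 f) :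
    AEContinuous01 f := by
  obtain ⟨p, I, C, hI, -, hU, hL⟩ := hf
  have hfrontier (l) : ∀ᵐ u ∂volume.restrict (Ioc (0 : ℝ) 1), u ∉ frontier (I l) :=
    ae_restrict_of_ae <| measure_eq_zero_iff_ae_notMem.1 <|
      Convex.addHaar_frontier volume (convex_iff_ordConnected.2 (hI l))
  filter_upwards [ae_restrict_mem measurableSet_Ioc, ae_all_iff.2 hfrontier] with u hu hnot
  rw [← hU] at hu
  obtain ⟨l, hl⟩ := mem_iUnion.1 hu
  have hint : u ∈ interior (I l) := by
    by_contra hcon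
    exact hnot l ⟨subset_closure hl, hcon⟩
  exact (hL l).continuousOn.continuousAt (mem_interior_iff_mem_nhds.1 hint)

lemma ceil_mul_eq_succ {n k : ℕ} (hn : 0 < n) {u : ℝ}
    (hu : u ∈ Ioc ((k : ℝ) / n) (((k + 1 : ℕ) : ℝ) / n)) : ⌈(n : ℝ) * u⌉₊ = k + 1 := by
  have hn' : (0 : ℝ) < n := mod_cast hn
  obtain ⟨hlo, hhi⟩ := hu
  rw [div_lt_iff₀ hn'] at hlo
  rw [le_div_iff₀ hn'] at hhi
  rw [Nat.ceil_eq_iff k.succ_ne_zero, Nat.succ_eq_add_one, Nat.add_sub_cancel]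
  constructor <;> linarith

lemma intervalIntegral_ceil_mul (y : ℕ → ℝ) {n : ℕ} (hn : 0 < n) (k : ℕ) :
    IntervalIntegrable (fun u : ℝ => y ⌈(n : ℝ) * u⌉₊) volume (k / n) ((k + 1 : ℕ) / n) ∧
      ∫ u in (k / n : ℝ)..((k + 1 : ℕ) / n), y ⌈(n : ℝ) * u⌉₊ = (n : ℝ)⁻¹ * y (k + 1) := by
  have hle : (k : ℝ) / n ≤ ((k + 1 : ℕ) : ℝ) / n := by gcongr; omega
  have hconst : EqOn (fun u : ℝ => y ⌈(n : ℝ) * u⌉₊) (fun _ => y (k + 1))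
      (Ioc ((k : ℝ) / n) (((k + 1 : ℕ) : ℝ) / n)) := fun u hu =>
    congrArg y (ceil_mul_eq_succ hn hu)
  constructor
  · rw [intervalIntegrable_iff_integrableOn_Ioc_of_le hle]
    exact (integrableOn_const (by simp)).congr_fun hconst.symm measurableSet_Ioc
  · rw [intervalIntegral.integral_of_le hle, setIntegral_congr_fun measurableSet_Ioc hconst,
      setIntegral_const, Measure.real, Real.volume_Ioc, ENNReal.toReal_ofReal (sub_nonneg.2 hle),
      smul_eq_mul, ← sub_div]
    push_cast
    ring

lemma average_eq_integral_ceil (y : ℕ → ℝ) {n : ℕ} (hn : 0 < n) :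
    (n : ℝ)⁻¹ * ∑ t ∈ Finset.Icc 1 n, y t = ∫ u in Ioc (0 : ℝ) 1, y ⌈(n : ℝ) * u⌉₊ := by
  have hsum := intervalIntegral.sum_integral_adjacent_intervals (μ := volume) (n := n)
    (a := fun k : ℕ => (k : ℝ) / n) fun k _ => (intervalIntegral_ceil_mul y hn k).1
  have hn' : (n : ℝ) ≠ 0 := mod_cast hn.ne'
  simp only [(intervalIntegral_ceil_mul y hn _).2, Nat.cast_zero, zero_div, div_self hn',
    intervalIntegral.integral_of_le zero_le_one] at hsum
  rw [← hsum, ← Finset.mul_sum, Finset.range_eq_Ico, Finset.sum_Ico_add' y 0 n 1]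
  rfl

lemma ceil_mul_le {n : ℕ} {u : ℝ} (hu : u ≤ 1) : ⌈(n : ℝ) * u⌉₊ ≤ n :=
  Nat.ceil_le.2 (mul_le_of_le_one_right n.cast_nonneg hu)

lemma tendsto_ceil_mul_div {u : ℝ} (hu : 0 ≤ u) :
    Tendsto (fun n : ℕ => (⌈(n : ℝ) * u⌉₊ : ℝ) / n) atTop (nhds u) :=
  ((tendsto_nat_ceil_mul_div_atTop hu).comp (tendsto_natCast_atTop_atTop (R := ℝ))).congr
    fun n => by simp only [Function.comp_apply, mul_comm]

lemma tendsto_ceil_mul_atTop {u : ℝ} (hu : 0 < u) :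
    Tendsto (fun n : ℕ => ⌈(n : ℝ) * u⌉₊) atTop atTop :=
  tendsto_nat_ceil_atTop.comp (tendsto_natCast_atTop_atTop.atTop_mul_const hu)

lemma AEContinuous01.tendsto_ceil {F : ℝ → ℝ} (hF : AEContinuous01 F) :
    ∀ᵐ u ∂volume.restrict (Ioc (0 : ℝ) 1),
      Tendsto (fun n : ℕ => F ((⌈(n : ℝ) * u⌉₊ : ℝ) / n)) atTop (nhds (F u)) := by
  filter_upwards [hF, ae_restrict_mem measurableSet_Ioc] with u hFu hu
  exact hFu.tendsto.comp (tendsto_ceil_mul_div hu.1.le)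

lemma AEContinuous01.tendsto_of_eq_ceil {F : ℝ → ℝ} (hF : AEContinuous01 F) {k : ℕ}
    {x : ℕ → ℕ → ℝ} (hx : ∀ n t : ℕ, k < t → t ≤ n → x n t = F ((t : ℝ) / n)) :
    ∀ᵐ u ∂volume.restrict (Ioc (0 : ℝ) 1),
      Tendsto (fun n : ℕ => x n ⌈(n : ℝ) * u⌉₊) atTop (nhds (F u)) := by
  filter_upwards [hF.tendsto_ceil, ae_restrict_mem measurableSet_Ioc] with u hFu hu
  refine hFu.congr' ?_
  filter_upwards [(tendsto_ceil_mul_atTop hu.1).eventually_gt_atTop k] with n hn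
  exact (hx n _ hn (ceil_mul_le hu.2)).symm

/-- The step function `u ↦ x ⌈n u⌉` on `(0, 1]`, set to `0` where the index is at most `k`. -/
noncomputable def trimmedStep (k n : ℕ) (x : ℕ → ℝ) (u : ℝ) : ℝ :=
  if k < ⌈(n : ℝ) * u⌉₊ then x ⌈(n : ℝ) * u⌉₊ else 0

lemma measurable_trimmedStep (k n : ℕ) (x : ℕ → ℝ) : Measurable (trimmedStep k n x) :=
  (measurable_of_countable fun t => if k < t then x t else 0).comp
    (Nat.measurable_ceil.comp (measurable_const_mul _))

lemma trimmedAverage_eq_integral {k n : ℕ} (hn : 0 < n) (x : ℕ → ℝ) :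
    trimmedAverage k n x = n / ((n : ℝ) - k) * ∫ u in Ioc (0 : ℝ) 1, trimmedStep k n x u := by
  have hn' : (n : ℝ) ≠ 0 := mod_cast hn.ne'
  have hfilter : {t ∈ Finset.Icc 1 n | k < t} = Finset.Icc (k + 1) n := by
    ext t
    simp only [Finset.mem_filter, Finset.mem_Icc]
    omega
  simp only [trimmedStep, ← average_eq_integral_ceil (fun t => if k < t then x t else 0) hn,
    ← Finset.sum_filter, hfilter, trimmedAverage]
  field_simp

lemma norm_trimmedStep_le {k n : ℕ} {x : ℕ → ℝ} {B : ℝ} (hB : ∀ t, k < t → t ≤ n → |x t| ≤ B)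
    {u : ℝ} (hu : u ≤ 1) : ‖trimmedStep k n x u‖ ≤ max B 0 := by
  rw [trimmedStep]
  split_ifs with hk
  · exact (hB _ hk (ceil_mul_le hu)).trans (le_max_left _ _)
  · simp only [norm_zero, le_max_right]

lemma tendsto_trimmedStep (k : ℕ) {x : ℕ → ℕ → ℝ} {φ : ℝ → ℝ}
    (hx : ∀ᵐ u ∂volume.restrict (Ioc (0 : ℝ) 1),
      Tendsto (fun n : ℕ => x n ⌈(n : ℝ) * u⌉₊) atTop (nhds (φ u))) :
    ∀ᵐ u ∂volume.restrict (Ioc (0 : ℝ) 1),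
      Tendsto (fun n => trimmedStep k n (x n) u) atTop (nhds (φ u)) := by
  filter_upwards [hx, ae_restrict_mem measurableSet_Ioc] with u hxu hu
  refine hxu.congr' ?_
  filter_upwards [(tendsto_ceil_mul_atTop hu.1).eventually_gt_atTop k] with n hn
  rw [trimmedStep, if_pos hn]

lemma integrableOn_of_tendsto_ceil (k : ℕ) {x : ℕ → ℕ → ℝ} {B : ℝ}
    (hB : ∀ n t, k < t → t ≤ n → |x n t| ≤ B) {φ : ℝ → ℝ}
    (hx : ∀ᵐ u ∂volume.restrict (Ioc (0 : ℝ) 1),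
      Tendsto (fun n : ℕ => x n ⌈(n : ℝ) * u⌉₊) atTop (nhds (φ u))) :
    IntegrableOn φ (Ioc (0 : ℝ) 1) := by
  have hlim := tendsto_trimmedStep k hx
  refine Integrable.of_bound (aestronglyMeasurable_of_tendsto_ae atTop
    (fun n => (measurable_trimmedStep k n (x n)).aestronglyMeasurable) hlim) (max B 0) ?_
  filter_upwards [hlim, ae_restrict_mem measurableSet_Ioc] with u hlim hu
  exact le_of_tendsto hlim.norm (Eventually.of_forall fun n => norm_trimmedStep_le (hB n) hu.2)

lemma tendsto_trimmedAverage (k : ℕ) {x : ℕ → ℕ → ℝ} {B : ℝ}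
    (hB : ∀ n t, k < t → t ≤ n → |x n t| ≤ B) {φ : ℝ → ℝ}
    (hx : ∀ᵐ u ∂volume.restrict (Ioc (0 : ℝ) 1),
      Tendsto (fun n : ℕ => x n ⌈(n : ℝ) * u⌉₊) atTop (nhds (φ u))) :
    Tendsto (fun n => trimmedAverage k n (x n)) atTop (nhds (∫ u in Ioc (0 : ℝ) 1, φ u)) := by
  have hint : Tendsto (fun n => ∫ u in Ioc (0 : ℝ) 1, trimmedStep k n (x n) u) atTop
      (nhds (∫ u in Ioc (0 : ℝ) 1, φ u)) :=
    tendsto_integral_of_dominated_convergence (fun _ => max B 0)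
      (fun n => (measurable_trimmedStep k n (x n)).aestronglyMeasurable) (integrable_const _)
      (fun n => (ae_restrict_mem measurableSet_Ioc).mono fun u hu =>
        norm_trimmedStep_le (hB n) hu.2)
      (tendsto_trimmedStep k hx)
  have hfactor : Tendsto (fun n : ℕ => (n : ℝ) / ((n : ℝ) - k)) atTop (nhds 1) := by
    simpa only [sub_eq_add_neg] using tendsto_natCast_div_add_atTop (-(k : ℝ))
  refine ((one_mul (_ : ℝ)) ▸ hfactor.mul hint).congr' ?_
  filter_upwards [eventually_gt_atTop 0] with n hn
  rw [trimmedAverage_eq_integral hn]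

lemma trimmedAverage_const {k n : ℕ} (hkn : k < n) (a : ℝ) :
    trimmedAverage k n (fun _ => a) = a := by
  have hne : (n : ℝ) - k ≠ 0 := (sub_pos.2 (mod_cast hkn)).ne'
  rw [trimmedAverage, Finset.sum_const, Nat.card_Icc, nsmul_eq_mul, Nat.add_sub_add_right,
    Nat.cast_sub hkn.le, inv_mul_cancel_left₀ hne]

lemma trimmedAverage_of_le {k n : ℕ} (hnk : n ≤ k) (x : ℕ → ℝ) : trimmedAverage k n x = 0 := by
  rw [trimmedAverage, Finset.Icc_eq_empty_of_lt (Nat.lt_succ_of_le hnk), Finset.sum_empty,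
    mul_zero]

lemma abs_trimmedAverage_le (k n : ℕ) (x : ℕ → ℝ) :
    |trimmedAverage k n x| ≤ trimmedAverage k n fun t => |x t| := by
  rcases le_or_gt n k with hnk | hkn
  · rw [trimmedAverage_of_le hnk, trimmedAverage_of_le hnk, abs_zero]
  · have hpos : (0 : ℝ) < n - k := sub_pos.2 (mod_cast hkn)
    rw [trimmedAverage, trimmedAverage, abs_mul, abs_of_pos (inv_pos.2 hpos)]
    exact mul_le_mul_of_nonneg_left (Finset.abs_sum_le_sum_abs _ _) (inv_pos.2 hpos).le

lemma trimmedAverage_mono {k n : ℕ} {x y : ℕ → ℝ} (hxy : ∀ t, k < t → t ≤ n → x t ≤ y t) :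
    trimmedAverage k n x ≤ trimmedAverage k n y := by
  rcases le_or_gt n k with hnk | hkn
  · rw [trimmedAverage_of_le hnk, trimmedAverage_of_le hnk]
  · refine mul_le_mul_of_nonneg_left (Finset.sum_le_sum fun t ht => ?_)
      (inv_nonneg.2 (sub_nonneg.2 (mod_cast hkn.le)))
    exact hxy t (Finset.mem_Icc.1 ht).1 (Finset.mem_Icc.1 ht).2

lemma trimmedAverage_le_of_forall_le {k n : ℕ} {x : ℕ → ℝ} {a : ℝ} (ha : 0 ≤ a)
    (hx : ∀ t, k < t → t ≤ n → x t ≤ a) : trimmedAverage k n x ≤ a := by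
  rcases le_or_gt n k with hnk | hkn
  · rwa [trimmedAverage_of_le hnk]
  · exact (trimmedAverage_mono hx).trans_eq (trimmedAverage_const hkn a)

lemma trimmedAverage_add (k n : ℕ) (x y : ℕ → ℝ) :
    trimmedAverage k n (fun t => x t + y t) = trimmedAverage k n x + trimmedAverage k n y := by
  rw [trimmedAverage, Finset.sum_add_distrib, mul_add]
  rfl

lemma trimmedAverage_const_mul (k n : ℕ) (a : ℝ) (x : ℕ → ℝ) :
    trimmedAverage k n (fun t => a * x t) = a * trimmedAverage k n x := by
  rw [trimmedAverage, ← Finset.mul_sum, mul_left_comm]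
  rfl

lemma setIntegral_pos_of_forall_pos {α : Type*} [MeasurableSpace α] {μ : Measure α} {s : Set α}
    {f : α → ℝ} (hs : MeasurableSet s) (hμs : μ s ≠ 0) (hf : IntegrableOn f s μ)
    (hpos : ∀ u ∈ s, 0 < f u) : 0 < ∫ u in s, f u ∂μ := by
  rw [setIntegral_pos_iff_support_of_nonneg_ae
    ((ae_restrict_mem hs).mono fun u hu => (hpos u hu).le) hf,
    inter_eq_self_of_subset_right fun u hu => Function.mem_support.2 (hpos u hu).ne']
  exact pos_iff_ne_zero.2 hμs

lemma AEContinuous01.integral_pos {F : ℝ → ℝ} (hF : AEContinuous01 F) (k : ℕ) {B : ℝ}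
    (hB : ∀ n t : ℕ, k < t → t ≤ n → |F ((t : ℝ) / n)| ≤ B)
    (hpos : ∀ u ∈ Ioc (0 : ℝ) 1, 0 < F u) : 0 < ∫ u in Ioc (0 : ℝ) 1, F u := by
  refine setIntegral_pos_of_forall_pos measurableSet_Ioc ?_
    (integrableOn_of_tendsto_ceil k hB hF.tendsto_ceil) hpos
  simp only [Real.volume_Ioc, sub_zero, ENNReal.ofReal_one, ne_eq, one_ne_zero, not_false_eq_true]

end Averages

section ConvergenceInMeasure

variable {Ω : Type*} [MeasurableSpace Ω] {μ : Measure Ω}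

lemma tendstoInMeasure_comp_of_continuousAt {E F : Type*} [PseudoMetricSpace E]
    [PseudoMetricSpace F] {X : ℕ → Ω → E} {x : E} {f : E → F}
    (hX : TendstoInMeasure μ X atTop fun _ => x) (hf : ContinuousAt f x) :
    TendstoInMeasure μ (fun n ω => f (X n ω)) atTop fun _ => f x := by
  rw [tendstoInMeasure_iff_dist] at *
  intro e he
  obtain ⟨d, hd, hdist⟩ := Metric.continuousAt_iff.1 hf e he
  refine tendsto_of_tendsto_of_tendsto_of_le_of_le tendsto_const_nhds (hX d hd)
    (fun _ => zero_le) fun n => measure_mono fun ω hω => ?_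
  by_contra hcon
  exact (hdist (not_le.1 hcon)).not_ge hω

lemma tendstoInMeasure_comp₂_of_continuousAt {E F G : Type*} [PseudoMetricSpace E]
    [PseudoMetricSpace F] [PseudoMetricSpace G] {X : ℕ → Ω → E} {Y : ℕ → Ω → F} {x : E} {y : F}
    {f : E → F → G} (hX : TendstoInMeasure μ X atTop fun _ => x)
    (hY : TendstoInMeasure μ Y atTop fun _ => y) (hf : ContinuousAt f.uncurry (x, y)) :
    TendstoInMeasure μ (fun n ω => f (X n ω) (Y n ω)) atTop fun _ => f x y := by
  rw [tendstoInMeasure_iff_dist] at *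
  intro e he
  obtain ⟨d, hd, hdist⟩ := Metric.continuousAt_iff.1 hf e he
  refine tendsto_of_tendsto_of_tendsto_of_le_of_le tendsto_const_nhds
    ((add_zero (0 : ENNReal)) ▸ (hX d hd).add (hY d hd)) (fun _ => zero_le) fun n =>
    (measure_mono fun ω hω => ?_).trans (measure_union_le _ _)
  by_contra hcon
  simp only [mem_union, mem_ofPred_eq, not_or, not_le] at hcon
  exact (hdist (x := (X n ω, Y n ω)) (max_lt hcon.1 hcon.2)).not_ge hω

lemma tendstoInMeasure_add {X Y : ℕ → Ω → ℝ} {x y : ℝ}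
    (hX : TendstoInMeasure μ X atTop fun _ => x) (hY : TendstoInMeasure μ Y atTop fun _ => y) :
    TendstoInMeasure μ (fun n ω => X n ω + Y n ω) atTop fun _ => x + y :=
  tendstoInMeasure_comp₂_of_continuousAt hX hY continuous_add.continuousAt

lemma tendstoInMeasure_sub {X Y : ℕ → Ω → ℝ} {x y : ℝ}
    (hX : TendstoInMeasure μ X atTop fun _ => x) (hY : TendstoInMeasure μ Y atTop fun _ => y) :
    TendstoInMeasure μ (fun n ω => X n ω - Y n ω) atTop fun _ => x - y :=
  tendstoInMeasure_comp₂_of_continuousAt hX hY continuous_sub.continuousAt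

lemma tendstoInMeasure_div {X Y : ℕ → Ω → ℝ} {x y : ℝ} (hy : y ≠ 0)
    (hX : TendstoInMeasure μ X atTop fun _ => x) (hY : TendstoInMeasure μ Y atTop fun _ => y) :
    TendstoInMeasure μ (fun n ω => X n ω / Y n ω) atTop fun _ => x / y :=
  tendstoInMeasure_comp₂_of_continuousAt hX hY (continuousAt_fst.div continuousAt_snd hy)

lemma tendstoInMeasure_of_tendsto [IsFiniteMeasure μ] {z : ℕ → ℝ} {x : ℝ}
    (hz : Tendsto z atTop (nhds x)) :
    TendstoInMeasure μ (fun n (_ : Ω) => z n) atTop fun _ => x :=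
  tendstoInMeasure_of_tendsto_ae (fun _ => aestronglyMeasurable_const) (ae_of_all _ fun _ => hz)

lemma tendstoInMeasure_finsetSum [IsFiniteMeasure μ] {ι : Type*} (s : Finset ι)
    {X : ι → ℕ → Ω → ℝ} {x : ι → ℝ}
    (hX : ∀ i ∈ s, TendstoInMeasure μ (X i) atTop fun _ => x i) :
    TendstoInMeasure μ (fun n ω => ∑ i ∈ s, X i n ω) atTop fun _ => ∑ i ∈ s, x i := by
  classical
  induction s using Finset.induction_on with
  | empty => exact tendstoInMeasure_of_tendsto tendsto_const_nhds
  | insert i s hi ih =>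
    simp only [Finset.sum_insert hi]
    exact tendstoInMeasure_add (hX i (Finset.mem_insert_self i s))
      (ih fun j hj => hX j (Finset.mem_insert_of_mem hj))

lemma tendstoInMeasure_of_tendsto_integral_abs_sub [IsFiniteMeasure μ] {X : ℕ → Ω → ℝ} {x : ℝ}
    (hint : ∀ n, Integrable (X n) μ)
    (hX : Tendsto (fun n => ∫ ω, |X n ω - x| ∂μ) atTop (nhds 0)) :
    TendstoInMeasure μ X atTop fun _ => x := by
  rw [tendstoInMeasure_iff_measureReal_dist]
  intro e he
  refine squeeze_zero (fun _ => measureReal_nonneg) (fun n => ?_)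
    (mul_zero e⁻¹ ▸ hX.const_mul e⁻¹)
  rw [inv_mul_eq_div, le_div_iff₀ he, mul_comm]
  exact mul_meas_ge_le_integral_of_nonneg (ae_of_all _ fun ω => abs_nonneg (X n ω - x))
    ((hint n).sub (integrable_const x)).abs e

lemma tendsto_integral_abs_of_tendstoInMeasure_zero [IsFiniteMeasure μ] {X : ℕ → Ω → ℝ} {B : ℝ}
    (hmeas : ∀ n, AEStronglyMeasurable (X n) μ) (hB : ∀ᶠ n in atTop, ∀ ω, |X n ω| ≤ B)
    (hX : TendstoInMeasure μ X atTop fun _ => (0 : ℝ)) :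
    Tendsto (fun n => ∫ ω, |X n ω| ∂μ) atTop (nhds 0) := by
  refine tendsto_of_subseq_tendsto fun ns hns => ?_
  obtain ⟨ms, hmono, hms⟩ := (hX.comp hns).exists_seq_tendsto_ae
  refine ⟨ms, ?_⟩
  have hlim : ∀ᵐ ω ∂μ, Tendsto (fun i => |X (ns (ms i)) ω|) atTop (nhds 0) := by
    filter_upwards [hms] with ω hω
    exact abs_zero (α := ℝ) ▸ hω.abs
  have hbound : ∀ᶠ i in atTop, ∀ᵐ ω ∂μ, ‖|X (ns (ms i)) ω|‖ ≤ B :=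
    ((hns.comp hmono.tendsto_atTop).eventually hB).mono fun i hi =>
      ae_of_all _ fun ω => (abs_abs _).trans_le (hi ω)
  simpa only [integral_zero] using tendsto_integral_filter_of_dominated_convergence (fun _ => B)
    (Eventually.of_forall fun i => continuous_abs.comp_aestronglyMeasurable (hmeas _)) hbound
    (integrable_const B) hlim

/-- The mean absolute deviation `E|X - E X|`, the distance to the mean in which the laws of large
numbers below are stated: it is subadditive in `X` and finite without second moments. -/
noncomputable def meanAbsDev (μ : Measure Ω) (X : Ω → ℝ) : ℝ :=
  ∫ ω, |X ω - ∫ ω', X ω' ∂μ| ∂μ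

lemma meanAbsDev_nonneg (X : Ω → ℝ) : 0 ≤ meanAbsDev μ X :=
  integral_nonneg fun _ => abs_nonneg _

lemma meanAbsDev_add_le [IsFiniteMeasure μ] {X Y : Ω → ℝ} (hX : Integrable X μ)
    (hY : Integrable Y μ) :
    meanAbsDev μ (fun ω => X ω + Y ω) ≤ meanAbsDev μ X + meanAbsDev μ Y := by
  have hX' : Integrable (fun ω => |X ω - ∫ ω', X ω' ∂μ|) μ := (hX.sub (integrable_const _)).abs
  have hY' : Integrable (fun ω => |Y ω - ∫ ω', Y ω' ∂μ|) μ := (hY.sub (integrable_const _)).abs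
  rw [meanAbsDev, meanAbsDev, meanAbsDev, integral_add hX hY, ← integral_add hX' hY']
  refine integral_mono ((hX.add hY).sub (integrable_const _)).abs (hX'.add hY') fun ω => ?_
  exact (congrArg abs (add_sub_add_comm _ _ _ _)).trans_le (abs_add_le _ _)

lemma meanAbsDev_le_two_mul_integral [IsProbabilityMeasure μ] {X : Ω → ℝ} (hX0 : ∀ ω, 0 ≤ X ω)
    (hX : Integrable X μ) : meanAbsDev μ X ≤ 2 * ∫ ω, X ω ∂μ := by
  have hmean : 0 ≤ ∫ ω, X ω ∂μ := integral_nonneg hX0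
  calc meanAbsDev μ X ≤ ∫ ω, (X ω + ∫ ω', X ω' ∂μ) ∂μ :=
        integral_mono (hX.sub (integrable_const _)).abs (hX.add (integrable_const _)) fun ω =>
          (abs_sub _ _).trans_eq (by rw [abs_of_nonneg (hX0 ω), abs_of_nonneg hmean])
    _ = 2 * ∫ ω, X ω ∂μ := by
        rw [integral_add hX (integrable_const _), integral_const, probReal_univ, one_smul, two_mul]

lemma meanAbsDev_le_sqrt_variance [IsProbabilityMeasure μ] {X : Ω → ℝ} (hX : MemLp X 2 μ) :
    meanAbsDev μ X ≤ √(Var[X; μ]) := by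
  have hdev : MemLp (fun ω => |X ω - ∫ ω', X ω' ∂μ|) 2 μ := (hX.sub (memLp_const _)).abs
  refine Real.le_sqrt_of_sq_le ?_
  have hnonneg := variance_nonneg (fun ω => |X ω - ∫ ω', X ω' ∂μ|) μ
  rw [variance_eq_sub hdev] at hnonneg
  rw [variance_eq_integral hX.aestronglyMeasurable.aemeasurable]
  simpa only [Pi.pow_apply, sq_abs, meanAbsDev] using sub_nonneg.1 hnonneg

lemma tendstoInMeasure_of_meanAbsDev [IsProbabilityMeasure μ] {X : ℕ → Ω → ℝ} {x : ℝ}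
    (hint : ∀ n, Integrable (X n) μ)
    (hdev : Tendsto (fun n => meanAbsDev μ (X n)) atTop (nhds 0))
    (hmean : Tendsto (fun n => ∫ ω, X n ω ∂μ) atTop (nhds x)) :
    TendstoInMeasure μ X atTop fun _ => x := by
  refine tendstoInMeasure_of_tendsto_integral_abs_sub hint ?_
  have hbias : Tendsto (fun n => |∫ ω, X n ω ∂μ - x|) atTop (nhds 0) := by
    simpa only [sub_self, abs_zero] using (hmean.sub_const x).abs
  refine squeeze_zero (fun n => integral_nonneg fun _ => abs_nonneg _) (fun n => ?_)
    (add_zero (0 : ℝ) ▸ hdev.add hbias)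
  have hdev_int : Integrable (fun ω => |X n ω - ∫ ω', X n ω' ∂μ|) μ :=
    ((hint n).sub (integrable_const _)).abs
  calc ∫ ω, |X n ω - x| ∂μ
      ≤ ∫ ω, (|X n ω - ∫ ω', X n ω' ∂μ| + |∫ ω', X n ω' ∂μ - x|) ∂μ :=
        integral_mono ((hint n).sub (integrable_const x)).abs
          (hdev_int.add (integrable_const _)) fun ω => abs_sub_le _ _ _
    _ = meanAbsDev μ (X n) + |∫ ω, X n ω ∂μ - x| := by
        rw [integral_add hdev_int (integrable_const _), integral_const, probReal_univ, one_smul]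
        rfl

lemma tendsto_meanAbsDev_of_tendsto_variance [IsProbabilityMeasure μ] {X : ℕ → Ω → ℝ}
    (hX : ∀ n, MemLp (X n) 2 μ) (hvar : Tendsto (fun n => Var[X n; μ]) atTop (nhds 0)) :
    Tendsto (fun n => meanAbsDev μ (X n)) atTop (nhds 0) :=
  squeeze_zero (fun n => meanAbsDev_nonneg (X n)) (fun n => meanAbsDev_le_sqrt_variance (hX n))
    (Real.sqrt_zero ▸ hvar.sqrt)

end ConvergenceInMeasure

section Covariance

variable {Ω : Type*} {F G m0 : MeasurableSpace Ω} {μ : Measure Ω}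

/-- The bound `|P(S ∩ T) - P(S) P(T)| ≤ α` on the dependence of the `σ`-fields `F` and `G`. -/
def StrongMixingLE (μ : Measure Ω) (F G : MeasurableSpace Ω) (α : ℝ) : Prop :=
  ∀ S T, MeasurableSet[F] S → MeasurableSet[G] T →
    |μ.real (S ∩ T) - μ.real S * μ.real T| ≤ α

lemma integrable_of_measurable_of_mem_Icc [IsFiniteMeasure μ] {X : Ω → ℝ} {A : ℝ}
    (hX : Measurable X) (hXA : ∀ ω, X ω ∈ Icc 0 A) : Integrable X μ :=
  Integrable.of_mem_Icc 0 A hX.aemeasurable (ae_of_all _ hXA)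

-- The layer-cake formula turns a uniform bound on upper level sets into a bound on integrals.
lemma abs_integral_sub_mul_integral_le {ρ κ : Measure Ω} [IsFiniteMeasure ρ] [IsFiniteMeasure κ]
    {X : Ω → ℝ} {A c δ : ℝ} (hA : 0 ≤ A) (hX : Measurable X) (hXA : ∀ ω, X ω ∈ Icc 0 A)
    (hlevel : ∀ t, |ρ.real {ω | t ≤ X ω} - c * κ.real {ω | t ≤ X ω}| ≤ δ) :
    |∫ ω, X ω ∂ρ - c * ∫ ω, X ω ∂κ| ≤ A * δ := by
  have hlayer (ξ : Measure Ω) [IsFiniteMeasure ξ] :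
      ∫ ω, X ω ∂ξ = ∫ t in Ioc 0 A, ξ.real {ω | t ≤ X ω} :=
    (integrable_of_measurable_of_mem_Icc hX hXA).integral_eq_integral_Ioc_meas_le
      (ae_of_all _ fun ω => (hXA ω).1) (ae_of_all _ fun ω => (hXA ω).2)
  have hint (ξ : Measure Ω) [IsFiniteMeasure ξ] :
      IntegrableOn (fun t => ξ.real {ω | t ≤ X ω}) (Ioc 0 A) := by
    refine (AntitoneOn.integrableOn_isCompact isCompact_Icc ?_).mono_set Ioc_subset_Icc_self
    exact fun s _ t _ hst => measureReal_mono fun ω hω => hst.trans hω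
  rw [hlayer ρ, hlayer κ, ← integral_const_mul, ← integral_sub (hint ρ) ((hint κ).const_mul c),
    ← Real.norm_eq_abs]
  refine (norm_setIntegral_le_of_norm_le_const measure_Ioc_lt_top fun t _ => hlevel t).trans_eq ?_
  rw [Measure.real, Real.volume_Ioc, sub_zero, ENNReal.toReal_ofReal hA, mul_comm]

lemma StrongMixingLE.abs_setIntegral_sub_le [IsFiniteMeasure μ] {α A : ℝ}
    (hα : StrongMixingLE μ F G α) (hF : F ≤ m0) (hA : 0 ≤ A) {X : Ω → ℝ}
    (hX : Measurable[F] X) (hXA : ∀ ω, X ω ∈ Icc 0 A) {T : Set Ω} (hT : MeasurableSet[G] T) :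
    |∫ ω in T, X ω ∂μ - μ.real T * ∫ ω, X ω ∂μ| ≤ A * α := by
  refine abs_integral_sub_mul_integral_le hA (hX.mono hF le_rfl) hXA fun t => ?_
  have hS : MeasurableSet[F] {ω | t ≤ X ω} := hX measurableSet_Ici
  rw [measureReal_restrict_apply (hF _ hS), mul_comm]
  exact hα _ _ hS hT

lemma StrongMixingLE.abs_covariance_le [IsProbabilityMeasure μ] {α A B : ℝ}
    (hα : StrongMixingLE μ F G α) (hF : F ≤ m0) (hG : G ≤ m0) (hA : 0 ≤ A)
    (hB : 0 ≤ B) {X Y : Ω → ℝ} (hX : Measurable[F] X) (hXA : ∀ ω, X ω ∈ Icc 0 A)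
    (hY : Measurable[G] Y) (hYB : ∀ ω, Y ω ∈ Icc 0 B) :
    |cov[X, Y; μ]| ≤ B * (A * α) := by
  have hXm : Measurable X := hX.mono hF le_rfl
  have hYm : Measurable Y := hY.mono hG le_rfl
  have hX0 (ω) : 0 ≤ X ω := (hXA ω).1
  -- `E[XY]` is the integral of `Y` against the measure with density `X`.
  set ρ : Measure Ω := μ.withDensity fun ω => ENNReal.ofReal (X ω) with hρ
  have : IsFiniteMeasure ρ :=
    isFiniteMeasure_withDensity_ofReal (integrable_of_measurable_of_mem_Icc hXm hXA).2
  have hprod : ∫ ω, X ω * Y ω ∂μ = ∫ ω, Y ω ∂ρ := by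
    rw [hρ, integral_withDensity_eq_integral_toReal_smul hXm.ennreal_ofReal
      (ae_of_all _ fun _ => ENNReal.ofReal_lt_top)]
    simp only [ENNReal.toReal_ofReal (hX0 _), smul_eq_mul]
  have hρ_real {T : Set Ω} (hT : MeasurableSet T) : ρ.real T = ∫ ω in T, X ω ∂μ := by
    rw [hρ, Measure.real, withDensity_apply _ hT,
      integral_eq_lintegral_of_nonneg_ae (ae_of_all _ hX0) hXm.aestronglyMeasurable]
  have hmemX : MemLp X 2 μ := memLp_of_bounded (ae_of_all _ hXA) hXm.aestronglyMeasurable 2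
  have hmemY : MemLp Y 2 μ := memLp_of_bounded (ae_of_all _ hYB) hYm.aestronglyMeasurable 2
  rw [covariance_eq_sub hmemX hmemY]
  simp only [Pi.mul_apply]
  rw [hprod]
  refine abs_integral_sub_mul_integral_le hB hYm hYB fun t => ?_
  have hT : MeasurableSet[G] {ω | t ≤ Y ω} := hY measurableSet_Ici
  rw [hρ_real (hG _ hT), mul_comm (∫ ω, X ω ∂μ)]
  exact hα.abs_setIntegral_sub_le hF hA hX hXA hT

lemma sum_dist_le_two_mul_tsum {β : ℕ → ℝ} (hβ0 : ∀ d, 0 ≤ β d) (hβ : Summable β)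
    (s : Finset ℕ) (j : ℕ) : ∑ k ∈ s, β (Nat.dist j k) ≤ 2 * ∑' d, β d := by
  have hside (p : ℕ → Prop) [DecidablePred p]
      (hp : InjOn (Nat.dist j) (s.filter p : Set ℕ)) :
      ∑ k ∈ s with p k, β (Nat.dist j k) ≤ ∑' d, β d := by
    rw [← Finset.sum_image hp]
    exact hβ.sum_le_tsum _ fun d _ => hβ0 d
  rw [← Finset.sum_filter_add_sum_filter_not s (j ≤ ·), two_mul]
  refine add_le_add (hside _ ?_) (hside _ ?_) <;>
  · intro k hk l hl hkl
    simp only [Finset.coe_filter, mem_ofPred_eq, Nat.dist] at hk hl hkl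
    omega

lemma variance_weightedSum_le [IsFiniteMeasure μ] {s : Finset ℕ} {X : ℕ → Ω → ℝ} {w : ℕ → ℝ}
    {W : ℝ} {β : ℕ → ℝ} (hX : ∀ j ∈ s, MemLp (X j) 2 μ) (hw0 : ∀ j ∈ s, 0 ≤ w j)
    (hwW : ∀ j ∈ s, w j ≤ W) (hβ0 : ∀ d, 0 ≤ β d) (hβ : Summable β)
    (hcov : ∀ j ∈ s, ∀ k ∈ s, cov[X j, X k; μ] ≤ β (Nat.dist j k)) :
    Var[fun ω => ∑ j ∈ s, w j * X j ω; μ] ≤ W * (2 * ∑' d, β d) * ∑ j ∈ s, w j := by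
  rw [variance_fun_sum' fun j hj => (hX j hj).const_mul (w j), Finset.mul_sum]
  refine Finset.sum_le_sum fun j hj => ?_
  calc ∑ k ∈ s, cov[fun ω => w j * X j ω, fun ω => w k * X k ω; μ]
      = ∑ k ∈ s, w j * (w k * cov[X j, X k; μ]) :=
        Finset.sum_congr rfl fun k _ => by
          rw [covariance_const_mul_left, covariance_const_mul_right]
    _ ≤ ∑ k ∈ s, w j * (W * β (Nat.dist j k)) := by
        refine Finset.sum_le_sum fun k hk => mul_le_mul_of_nonneg_left ?_ (hw0 j hj)
        exact (mul_le_mul_of_nonneg_left (hcov j hj k hk) (hw0 k hk)).trans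
          (mul_le_mul_of_nonneg_right (hwW k hk) (hβ0 _))
    _ = w j * (W * ∑ k ∈ s, β (Nat.dist j k)) := by rw [← Finset.mul_sum, ← Finset.mul_sum]
    _ ≤ w j * (W * (2 * ∑' d, β d)) := by
        gcongr
        · exact hw0 j hj
        · exact (hw0 j hj).trans (hwW j hj)
        · exact sum_dist_le_two_mul_tsum hβ0 hβ s j
    _ = W * (2 * ∑' d, β d) * w j := mul_comm _ _

end Covariance

section WindowStatistics

variable {Ω : Type*} {m0 : MeasurableSpace Ω} {μ : Measure Ω} {ε : ℕ → ℕ → Ω → ℝ}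

lemma pastField_le (hε : ∀ n t, Measurable (ε n t)) (n t : ℕ) : pastField ε n t ≤ m0 :=
  iSup₂_le fun u _ => (hε n u).comap_le

lemma futureField_le (hε : ∀ n t, Measurable (ε n t)) (n t : ℕ) : futureField ε n t ≤ m0 :=
  iSup₂_le fun u _ => (hε n u).comap_le

lemma measurable_pastField (ε : ℕ → ℕ → Ω → ℝ) {n u t : ℕ} (hut : u ≤ t) :
    Measurable[pastField ε n t] (ε n u) :=
  measurable_iff_comap_le.2 <|
    le_iSup₂_of_le (f := fun u (_ : u ∈ {u : ℕ | u ≤ t}) =>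
      MeasurableSpace.comap (ε n u) inferInstance) u hut le_rfl

lemma measurable_futureField (ε : ℕ → ℕ → Ω → ℝ) {n u t : ℕ} (htu : t ≤ u) :
    Measurable[futureField ε n t] (ε n u) :=
  measurable_iff_comap_le.2 <|
    le_iSup₂_of_le (f := fun u (_ : u ∈ {u : ℕ | t ≤ u}) =>
      MeasurableSpace.comap (ε n u) inferInstance) u htu le_rfl

lemma strongMixingLE_one (μ : Measure Ω) [IsProbabilityMeasure μ] (F G : MeasurableSpace Ω) :
    StrongMixingLE μ F G 1 := fun _ _ _ _ =>
  abs_sub_le_of_nonneg_of_le measureReal_nonneg measureReal_le_one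
    (mul_nonneg measureReal_nonneg measureReal_nonneg)
    (mul_le_one₀ measureReal_le_one measureReal_nonneg measureReal_le_one)

lemma alphaMix_nonneg (μ : Measure Ω) (ε : ℕ → ℕ → Ω → ℝ) (h : ℕ) : 0 ≤ alphaMix μ ε h := by
  refine Real.iSup_nonneg fun n => Real.iSup_nonneg fun t => Real.sSup_nonneg ?_
  rintro x ⟨A, B, -, -, rfl⟩
  exact abs_nonneg _

lemma alphaMix_le_one (μ : Measure Ω) [IsProbabilityMeasure μ] (ε : ℕ → ℕ → Ω → ℝ) (h : ℕ) :
    alphaMix μ ε h ≤ 1 := by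
  refine Real.iSup_le (fun n => Real.iSup_le (fun t => Real.sSup_le ?_ zero_le_one) zero_le_one)
    zero_le_one
  rintro x ⟨A, B, hA, hB, rfl⟩
  exact strongMixingLE_one μ _ _ A B hA hB

lemma strongMixingLE_alphaMix (μ : Measure Ω) [IsProbabilityMeasure μ] (ε : ℕ → ℕ → Ω → ℝ)
    (n t h : ℕ) :
    StrongMixingLE μ (pastField ε n t) (futureField ε n (t + h)) (alphaMix μ ε h) := by
  intro A B hA hB
  have hle (n t : ℕ) : ∀ x ∈ {x : ℝ | ∃ A B : Set Ω,
      MeasurableSet[pastField ε n t] A ∧ MeasurableSet[futureField ε n (t + h)] B ∧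
      x = |(μ (A ∩ B)).toReal - (μ A).toReal * (μ B).toReal|}, x ≤ 1 := by
    rintro x ⟨A, B, hA, hB, rfl⟩
    exact strongMixingLE_one μ _ _ A B hA hB
  refine le_trans (le_csSup ⟨1, hle n t⟩ ⟨A, B, hA, hB, rfl⟩) ?_
  refine le_trans (le_ciSup (f := fun t => sSup {x : ℝ | ∃ A B : Set Ω,
      MeasurableSet[pastField ε n t] A ∧ MeasurableSet[futureField ε n (t + h)] B ∧
      x = |(μ (A ∩ B)).toReal - (μ A).toReal * (μ B).toReal|}) ⟨1, ?_⟩ t)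
    (le_ciSup (f := fun n => ⨆ t : ℕ, sSup {x : ℝ | ∃ A B : Set Ω,
      MeasurableSet[pastField ε n t] A ∧ MeasurableSet[futureField ε n (t + h)] B ∧
      x = |(μ (A ∩ B)).toReal - (μ A).toReal * (μ B).toReal|}) ⟨1, ?_⟩ n)
  · rintro _ ⟨t, rfl⟩
    exact Real.sSup_le (hle n t) zero_le_one
  · rintro _ ⟨n, rfl⟩
    exact Real.iSup_le (fun t => Real.sSup_le (hle n t) zero_le_one) zero_le_one

lemma summable_alphaMix_of_rpow (μ : Measure Ω) [IsProbabilityMeasure μ]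
    (ε : ℕ → ℕ → Ω → ℝ) {p : ℝ} (hp1 : p ≤ 1)
    (hmix : Summable fun h => alphaMix μ ε h ^ p) : Summable (alphaMix μ ε) := by
  refine Summable.of_nonneg_of_le (alphaMix_nonneg μ ε) (fun h => ?_) hmix
  conv_lhs => rw [← Real.rpow_one (alphaMix μ ε h)]
  exact Real.rpow_le_rpow_of_exponent_ge_of_imp (alphaMix_nonneg μ ε h) (alphaMix_le_one μ ε h)
    hp1 fun _ hone => absurd hone one_ne_zero

/-- The mixing bound at lag `d` for statistics of windows of length `h + 1`: the windows are
`d - h` apart, and for `d < h` they overlap and only the trivial bound `1` is available. -/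
noncomputable def windowMix (μ : Measure Ω) (ε : ℕ → ℕ → Ω → ℝ) (h d : ℕ) : ℝ :=
  if d < h then 1 else alphaMix μ ε (d - h)

lemma windowMix_nonneg (μ : Measure Ω) (ε : ℕ → ℕ → Ω → ℝ) (h d : ℕ) :
    0 ≤ windowMix μ ε h d := by
  rw [windowMix]
  split_ifs
  exacts [zero_le_one, alphaMix_nonneg _ _ _]

lemma summable_windowMix (hmix : Summable (alphaMix μ ε)) (h : ℕ) :
    Summable (windowMix μ ε h) := by
  rw [← summable_nat_add_iff h]
  simpa only [windowMix, Nat.not_lt_of_le (Nat.le_add_left _ _), if_false,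
    Nat.add_sub_cancel] using hmix

/-- `Z` is a statistic of the window `ε n (t - h), …, ε n t`. It is only recorded that `Z` is
measurable for the past of `t` and for the future of `t - h`, which is what mixing bounds need. -/
structure IsWindowStat (ε : ℕ → ℕ → Ω → ℝ) (n h t : ℕ) (Z : Ω → ℝ) : Prop where
  measurable_past : Measurable[pastField ε n t] Z
  measurable_future : Measurable[futureField ε n (t - h)] Z

namespace IsWindowStat

variable {n h t : ℕ} {Y Z : Ω → ℝ}

lemma eps (ε : ℕ → ℕ → Ω → ℝ) (n : ℕ) {h i : ℕ} (hi : i ≤ h) (t : ℕ) :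
    IsWindowStat ε n h t (ε n (t - i)) :=
  ⟨measurable_pastField ε (t.sub_le i), measurable_futureField ε (Nat.sub_le_sub_left hi t)⟩

lemma comp (hZ : IsWindowStat ε n h t Z) {f : ℝ → ℝ} (hf : Measurable f) :
    IsWindowStat ε n h t fun ω => f (Z ω) :=
  ⟨hf.comp hZ.measurable_past, hf.comp hZ.measurable_future⟩

lemma mul (hY : IsWindowStat ε n h t Y) (hZ : IsWindowStat ε n h t Z) :
    IsWindowStat ε n h t fun ω => Y ω * Z ω :=
  ⟨hY.measurable_past.fun_mul hZ.measurable_past,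
    hY.measurable_future.fun_mul hZ.measurable_future⟩

lemma measurable (hε : ∀ n t, Measurable (ε n t)) (hZ : IsWindowStat ε n h t Z) :
    Measurable Z :=
  hZ.measurable_past.mono (pastField_le hε n t) le_rfl

end IsWindowStat

lemma abs_covariance_windowStat_le [IsProbabilityMeasure μ] (hε : ∀ n t, Measurable (ε n t))
    {n h : ℕ} {A : ℝ} (hA : 0 ≤ A) {X : ℕ → Ω → ℝ} {j k : ℕ} (hjk : j ≤ k)
    (hXj : IsWindowStat ε n h j (X j)) (hXk : IsWindowStat ε n h k (X k))
    (hAj : ∀ ω, X j ω ∈ Icc 0 A) (hAk : ∀ ω, X k ω ∈ Icc 0 A) :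
    |cov[X j, X k; μ]| ≤ A ^ 2 * windowMix μ ε h (k - j) := by
  have hα : StrongMixingLE μ (pastField ε n j) (futureField ε n (k - h))
      (windowMix μ ε h (k - j)) := by
    rw [windowMix]
    split_ifs with hlt
    · exact strongMixingLE_one μ _ _
    · have hstart : k - h = j + (k - j - h) := by omega
      rw [hstart]
      exact strongMixingLE_alphaMix μ ε n j (k - j - h)
  refine (hα.abs_covariance_le (pastField_le hε n j) (futureField_le hε n (k - h)) hA hA
    hXj.measurable_past hAj hXk.measurable_future hAk).trans_eq ?_
  rw [sq, mul_assoc]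

lemma variance_weightedSum_windowStat_le [IsProbabilityMeasure μ]
    (hε : ∀ n t, Measurable (ε n t)) (hmix : Summable (alphaMix μ ε)) {n h : ℕ} {s : Finset ℕ}
    {A W : ℝ} (hA : 0 ≤ A) {X : ℕ → Ω → ℝ} {w : ℕ → ℝ}
    (hX : ∀ j ∈ s, IsWindowStat ε n h j (X j)) (hXA : ∀ j ∈ s, ∀ ω, X j ω ∈ Icc 0 A)
    (hw0 : ∀ j ∈ s, 0 ≤ w j) (hwW : ∀ j ∈ s, w j ≤ W) :
    Var[fun ω => ∑ j ∈ s, w j * X j ω; μ]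
      ≤ W * (2 * (A ^ 2 * ∑' d, windowMix μ ε h d)) * ∑ j ∈ s, w j := by
  rw [← tsum_mul_left]
  refine variance_weightedSum_le (fun j hj => memLp_of_bounded (ae_of_all _ (hXA j hj))
    ((hX j hj).measurable hε).aestronglyMeasurable 2) hw0 hwW
    (fun d => mul_nonneg (sq_nonneg A) (windowMix_nonneg μ ε h d))
    ((summable_windowMix hmix h).mul_left _) fun j hj k hk => (le_abs_self _).trans ?_
  rcases le_total j k with hjk | hkj
  · rw [Nat.dist_eq_sub_of_le hjk]
    exact abs_covariance_windowStat_le hε hA hjk (hX j hj) (hX k hk) (hXA j hj) (hXA k hk)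
  · rw [Nat.dist_eq_sub_of_le_right hkj, covariance_comm]
    exact abs_covariance_windowStat_le hε hA hkj (hX k hk) (hX j hj) (hXA k hk) (hXA j hj)

end WindowStatistics

section LawOfLargeNumbers

variable {Ω : Type*} [MeasurableSpace Ω] {μ : Measure Ω} {ε : ℕ → ℕ → Ω → ℝ} {k : ℕ}

/-- A uniformly integrable triangular array `(Y n t)`, `k < t ≤ n`, of nonnegative variables.
Uniform integrability is expressed through the truncations at a level `A`, which is the form in
which the law of large numbers uses it; entries outside the index range are unconstrained. -/
structure UnifIntegrableArray (μ : Measure Ω) (k : ℕ) (Y : ℕ → ℕ → Ω → ℝ) : Prop where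
  nonneg : ∀ n t, k < t → t ≤ n → ∀ ω, 0 ≤ Y n t ω
  integrable : ∀ n t, k < t → t ≤ n → Integrable (Y n t) μ
  exists_truncation : ∀ e > 0, ∃ A ≥ 0, ∀ n t, k < t → t ≤ n →
    ∫ ω, (Y n t ω - min (Y n t ω) A) ∂μ ≤ e

namespace UnifIntegrableArray

variable {Y : ℕ → ℕ → Ω → ℝ}

lemma mono (hY : UnifIntegrableArray μ k Y) {l : ℕ} (hkl : k ≤ l) : UnifIntegrableArray μ l Y where
  nonneg n t hlt := hY.nonneg n t (hkl.trans_lt hlt)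
  integrable n t hlt := hY.integrable n t (hkl.trans_lt hlt)
  exists_truncation e he :=
    let ⟨A, hA, htail⟩ := hY.exists_truncation e he
    ⟨A, hA, fun n t hlt => htail n t (hkl.trans_lt hlt)⟩

lemma of_mem_Icc [IsFiniteMeasure μ] {B : ℝ} (hB : 0 ≤ B)
    (hmeas : ∀ n t, k < t → t ≤ n → Measurable (Y n t))
    (hYB : ∀ n t, k < t → t ≤ n → ∀ ω, Y n t ω ∈ Icc 0 B) : UnifIntegrableArray μ k Y where
  nonneg n t hkt htn ω := (hYB n t hkt htn ω).1
  integrable n t hkt htn :=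
    integrable_of_measurable_of_mem_Icc (hmeas n t hkt htn) (hYB n t hkt htn)
  exists_truncation e he := ⟨B, hB, fun n t hkt htn => by
    simp only [fun ω => min_eq_left (hYB n t hkt htn ω).2, sub_self, integral_zero, he.le]⟩

lemma integrable_truncation [IsFiniteMeasure μ] (hY : UnifIntegrableArray μ k Y) {n t : ℕ}
    (hkt : k < t) (htn : t ≤ n) (A : ℝ) : Integrable (fun ω => min (Y n t ω) A) μ :=
  (hY.integrable n t hkt htn).inf (integrable_const A)

lemma integrable_tail [IsFiniteMeasure μ] (hY : UnifIntegrableArray μ k Y) {n t : ℕ}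
    (hkt : k < t) (htn : t ≤ n) (A : ℝ) : Integrable (fun ω => Y n t ω - min (Y n t ω) A) μ :=
  (hY.integrable n t hkt htn).sub (hY.integrable_truncation hkt htn A)

lemma exists_integral_le [IsProbabilityMeasure μ] (hY : UnifIntegrableArray μ k Y) :
    ∃ B, ∀ n t, k < t → t ≤ n → ∫ ω, Y n t ω ∂μ ≤ B := by
  obtain ⟨A, -, htail⟩ := hY.exists_truncation 1 one_pos
  refine ⟨A + 1, fun n t hkt htn => ?_⟩
  have htrunc : ∫ ω, min (Y n t ω) A ∂μ ≤ A := by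
    simpa only [integral_const, probReal_univ, one_smul] using
      integral_mono (hY.integrable_truncation hkt htn A) (integrable_const A)
        fun ω => min_le_right _ _
  have hsplit := integral_sub (hY.integrable n t hkt htn) (hY.integrable_truncation hkt htn A)
  linarith [htail n t hkt htn]

lemma coeff_mul [IsFiniteMeasure μ] (hY : UnifIntegrableArray μ k Y) {c : ℕ → ℕ → ℝ} {M : ℝ}
    (hM : 0 ≤ M) (hc : ∀ n t, k < t → t ≤ n → c n t ∈ Icc 0 M) :
    UnifIntegrableArray μ k fun n t ω => c n t * Y n t ω where
  nonneg n t hkt htn ω := mul_nonneg (hc n t hkt htn).1 (hY.nonneg n t hkt htn ω)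
  integrable n t hkt htn := (hY.integrable n t hkt htn).const_mul _
  exists_truncation e he := by
    obtain ⟨A, hA, htail⟩ := hY.exists_truncation (e / (M + 1)) (by positivity)
    refine ⟨M * A, mul_nonneg hM hA, fun n t hkt htn => ?_⟩
    obtain ⟨hc0, hcM⟩ := hc n t hkt htn
    have hpoint (ω) : c n t * Y n t ω - min (c n t * Y n t ω) (M * A)
        ≤ M * (Y n t ω - min (Y n t ω) A) :=
      calc c n t * Y n t ω - min (c n t * Y n t ω) (M * A)
          ≤ c n t * Y n t ω - c n t * min (Y n t ω) A := by
            rw [mul_min_of_nonneg _ _ hc0]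
            gcongr
        _ = c n t * (Y n t ω - min (Y n t ω) A) := (mul_sub _ _ _).symm
        _ ≤ M * (Y n t ω - min (Y n t ω) A) :=
            mul_le_mul_of_nonneg_right hcM (sub_nonneg.2 (min_le_left _ _))
    calc ∫ ω, (c n t * Y n t ω - min (c n t * Y n t ω) (M * A)) ∂μ
        ≤ ∫ ω, M * (Y n t ω - min (Y n t ω) A) ∂μ :=
          integral_mono_of_nonneg (ae_of_all _ fun ω => sub_nonneg.2 (min_le_left _ _))
            ((hY.integrable_tail hkt htn A).const_mul M) (ae_of_all _ hpoint)
      _ ≤ M * (e / (M + 1)) := by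
          rw [integral_const_mul]
          exact mul_le_mul_of_nonneg_left (htail n t hkt htn) hM
      _ ≤ e := by
          rw [mul_div_assoc', div_le_iff₀ (by positivity)]
          nlinarith

end UnifIntegrableArray

lemma sub_min_le_rpow {y A ν : ℝ} (hy : 0 ≤ y) (hA : 0 < A) (hν : 0 ≤ ν) :
    y - min y A ≤ A ^ (-ν) * y ^ (1 + ν) := by
  rcases le_total y A with hyA | hAy
  · rw [min_eq_left hyA, sub_self]
    positivity
  · have hy' : 0 < y := hA.trans_le hAy
    have hone : 1 ≤ A ^ (-ν) * y ^ ν := by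
      rw [Real.rpow_neg hA.le, ← div_eq_inv_mul, one_le_div (Real.rpow_pos_of_pos hA ν)]
      exact Real.rpow_le_rpow hA.le hAy hν
    calc y - min y A ≤ y * 1 := by rw [min_eq_right hAy]; linarith
      _ ≤ y * (A ^ (-ν) * y ^ ν) := mul_le_mul_of_nonneg_left hone hy
      _ = A ^ (-ν) * y ^ (1 + ν) := by rw [Real.rpow_add hy', Real.rpow_one]; ring

lemma integral_le_of_lintegral_ofReal_le {X : Ω → ℝ} (hX : Measurable X) (hX0 : ∀ ω, 0 ≤ X ω)
    {M : ℝ} (hM : ∫⁻ ω, ENNReal.ofReal (X ω) ∂μ ≤ ENNReal.ofReal M) :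
    Integrable X μ ∧ ∫ ω, X ω ∂μ ≤ max M 0 := by
  constructor
  · refine ⟨hX.aestronglyMeasurable, ?_⟩
    rw [hasFiniteIntegral_iff_ofReal (ae_of_all _ hX0)]
    exact hM.trans_lt ENNReal.ofReal_lt_top
  · rw [integral_eq_lintegral_of_nonneg_ae (ae_of_all _ hX0) hX.aestronglyMeasurable,
      ← ENNReal.toReal_ofReal']
    exact ENNReal.toReal_mono ENNReal.ofReal_ne_top hM

lemma UnifIntegrableArray.of_moment [IsFiniteMeasure μ] {Y : ℕ → ℕ → Ω → ℝ} {ν M : ℝ} (hν : 0 < ν)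
    (hmeas : ∀ n t, Measurable (Y n t)) (hY0 : ∀ n t ω, 0 ≤ Y n t ω)
    (hmom : ∀ n t, k < t → t ≤ n →
      ∫⁻ ω, ENNReal.ofReal (Y n t ω ^ (1 + ν)) ∂μ ≤ ENNReal.ofReal M) :
    UnifIntegrableArray μ k Y where
  nonneg n t _ _ := hY0 n t
  integrable n t hkt htn := by
    obtain ⟨hint, -⟩ := integral_le_of_lintegral_ofReal_le ((hmeas n t).pow_const (1 + ν))
      (fun ω => Real.rpow_nonneg (hY0 n t ω) _) (hmom n t hkt htn)
    refine ((integrable_const (1 : ℝ)).add hint).mono' (hmeas n t).aestronglyMeasurable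
      (ae_of_all _ fun ω => ?_)
    have htail := sub_min_le_rpow (hY0 n t ω) one_pos hν.le
    rw [Real.one_rpow, one_mul] at htail
    rw [Real.norm_of_nonneg (hY0 n t ω), Pi.add_apply]
    linarith [min_le_right (Y n t ω) 1]
  exists_truncation e he := by
    have hlim : Tendsto (fun A : ℝ => A ^ (-ν) * max M 0) atTop (nhds 0) := by
      simpa only [zero_mul] using (tendsto_rpow_neg_atTop hν).mul_const (max M 0)
    obtain ⟨A, hAe, hA⟩ := ((hlim.eventually_lt_const he).and (eventually_gt_atTop 0)).exists
    refine ⟨A, hA.le, fun n t hkt htn => le_trans ?_ hAe.le⟩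
    obtain ⟨hint, hle⟩ := integral_le_of_lintegral_ofReal_le ((hmeas n t).pow_const (1 + ν))
      (fun ω => Real.rpow_nonneg (hY0 n t ω) _) (hmom n t hkt htn)
    calc ∫ ω, (Y n t ω - min (Y n t ω) A) ∂μ
        ≤ ∫ ω, A ^ (-ν) * Y n t ω ^ (1 + ν) ∂μ :=
          integral_mono_of_nonneg (ae_of_all _ fun ω => sub_nonneg.2 (min_le_left _ _))
            (hint.const_mul _) (ae_of_all _ fun ω => sub_min_le_rpow (hY0 n t ω) hA hν.le)
      _ ≤ A ^ (-ν) * max M 0 := by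
          rw [integral_const_mul]
          exact mul_le_mul_of_nonneg_left hle (Real.rpow_nonneg hA.le _)

lemma integrable_trimmedAverage {n : ℕ} {X : ℕ → Ω → ℝ}
    (hX : ∀ t, k < t → t ≤ n → Integrable (X t) μ) :
    Integrable (fun ω => trimmedAverage k n fun t => X t ω) μ :=
  (integrable_finsetSum _ fun t ht =>
    hX t (Finset.mem_Icc.1 ht).1 (Finset.mem_Icc.1 ht).2).const_mul _

lemma integral_trimmedAverage {n : ℕ} {X : ℕ → Ω → ℝ}
    (hX : ∀ t, k < t → t ≤ n → Integrable (X t) μ) :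
    ∫ ω, trimmedAverage k n (fun t => X t ω) ∂μ = trimmedAverage k n fun t => ∫ ω, X t ω ∂μ := by
  simp only [trimmedAverage]
  rw [integral_const_mul, integral_finsetSum _ fun t ht =>
    hX t (Finset.mem_Icc.1 ht).1 (Finset.mem_Icc.1 ht).2]

lemma tendsto_zero_of_forall_le_add {x : ℕ → ℝ} (hx0 : ∀ n, 0 ≤ x n)
    (hx : ∀ δ > 0, ∃ a : ℕ → ℝ, Tendsto a atTop (nhds 0) ∧ ∀ n, x n ≤ a n + δ) :
    Tendsto x atTop (nhds 0) := by
  refine tendsto_order.2 ⟨fun c hc => Eventually.of_forall fun n => hc.trans_le (hx0 n),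
    fun c hc => ?_⟩
  obtain ⟨a, ha, hle⟩ := hx (c / 2) (half_pos hc)
  filter_upwards [ha.eventually_lt_const (half_pos hc)] with n hn
  linarith [hle n]

section Mixing

variable [IsProbabilityMeasure μ] {h : ℕ}

lemma tendsto_meanAbsDev_trimmedAverage_of_mem_Icc (hε : ∀ n t, Measurable (ε n t))
    (hmix : Summable (alphaMix μ ε)) {X : ℕ → ℕ → Ω → ℝ} {A : ℝ} (hA : 0 ≤ A)
    (hX : ∀ n t, k < t → t ≤ n → IsWindowStat ε n h t (X n t))
    (hXA : ∀ n t, k < t → t ≤ n → ∀ ω, X n t ω ∈ Icc 0 A) :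
    Tendsto (fun n => meanAbsDev μ fun ω => trimmedAverage k n fun t => X n t ω)
      atTop (nhds 0) := by
  have hrange {n t : ℕ} (ht : t ∈ Finset.Icc (k + 1) n) : k < t ∧ t ≤ n := Finset.mem_Icc.1 ht
  refine tendsto_meanAbsDev_of_tendsto_variance (fun n => ?_) ?_
  · have hsum : MemLp (fun ω => ∑ t ∈ Finset.Icc (k + 1) n, X n t ω) 2 μ :=
      memLp_finsetSum _ fun t ht =>
        memLp_of_bounded (ae_of_all _ (hXA n t (hrange ht).1 (hrange ht).2))
          ((hX n t (hrange ht).1 (hrange ht).2).measurable hε).aestronglyMeasurable 2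
    exact hsum.const_mul ((n : ℝ) - k)⁻¹
  have hinv : Tendsto (fun n : ℕ => ((n : ℝ) - k)⁻¹) atTop (nhds 0) :=
    tendsto_inv_atTop_zero.comp
      (tendsto_atTop_add_const_right _ _ (tendsto_natCast_atTop_atTop (R := ℝ)))
  refine squeeze_zero' (Eventually.of_forall fun n => variance_nonneg _ _) ?_
    (zero_mul (2 * (A ^ 2 * ∑' d, windowMix μ ε h d)) ▸ hinv.mul_const _)
  filter_upwards [eventually_gt_atTop k] with n hkn
  have hw0 : 0 ≤ ((n : ℝ) - k)⁻¹ := inv_nonneg.2 (sub_nonneg.2 (mod_cast hkn.le))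
  have hvar := variance_weightedSum_windowStat_le (s := Finset.Icc (k + 1) n)
    (w := fun _ => ((n : ℝ) - k)⁻¹) hε hmix hA
    (fun t ht => hX n t (hrange ht).1 (hrange ht).2)
    (fun t ht => hXA n t (hrange ht).1 (hrange ht).2) (fun _ _ => hw0) fun _ _ => le_rfl
  have hsum : ∑ _t ∈ Finset.Icc (k + 1) n, ((n : ℝ) - k)⁻¹ = 1 := by
    simpa only [trimmedAverage, Finset.mul_sum, mul_one] using trimmedAverage_const hkn 1
  simpa only [trimmedAverage, Finset.mul_sum, hsum, mul_one] using hvar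

lemma tendsto_meanAbsDev_trimmedAverage (hε : ∀ n t, Measurable (ε n t))
    (hmix : Summable (alphaMix μ ε)) {Y : ℕ → ℕ → Ω → ℝ} (hY : UnifIntegrableArray μ k Y)
    (hwin : ∀ n t, k < t → t ≤ n → IsWindowStat ε n h t (Y n t)) :
    Tendsto (fun n => meanAbsDev μ fun ω => trimmedAverage k n fun t => Y n t ω)
      atTop (nhds 0) := by
  refine tendsto_zero_of_forall_le_add (fun n => meanAbsDev_nonneg _) fun δ hδ => ?_
  obtain ⟨A, hA, htail⟩ := hY.exists_truncation (δ / 2) (half_pos hδ)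
  refine ⟨_, tendsto_meanAbsDev_trimmedAverage_of_mem_Icc hε hmix hA
    (X := fun n t ω => min (Y n t ω) A)
    (fun n t hkt htn => (hwin n t hkt htn).comp (measurable_id.min measurable_const))
    (fun n t hkt htn ω => ⟨le_min (hY.nonneg n t hkt htn ω) hA, min_le_right _ _⟩), fun n => ?_⟩
  have htrunc_int : Integrable (fun ω => trimmedAverage k n fun t => min (Y n t ω) A) μ :=
    integrable_trimmedAverage fun t hkt htn => hY.integrable_truncation hkt htn A
  have htail_int : Integrable (fun ω => trimmedAverage k n fun t => Y n t ω - min (Y n t ω) A) μ :=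
    integrable_trimmedAverage fun t hkt htn => hY.integrable_tail hkt htn A
  have hsplit (ω) : trimmedAverage k n (fun t => Y n t ω)
      = trimmedAverage k n (fun t => min (Y n t ω) A)
        + trimmedAverage k n (fun t => Y n t ω - min (Y n t ω) A) := by
    rw [← trimmedAverage_add]
    simp only [add_sub_cancel]
  have htail_nonneg (ω) : 0 ≤ trimmedAverage k n fun t => Y n t ω - min (Y n t ω) A :=
    (abs_nonneg _).trans <| (abs_trimmedAverage_le k n _).trans <| trimmedAverage_mono
      fun t _ _ => (abs_of_nonneg (sub_nonneg.2 (min_le_left _ _))).le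
  simp only [hsplit]
  refine (meanAbsDev_add_le htrunc_int htail_int).trans (add_le_add_right ?_ _)
  refine (meanAbsDev_le_two_mul_integral htail_nonneg htail_int).trans ?_
  rw [integral_trimmedAverage fun t hkt htn => hY.integrable_tail hkt htn A]
  linarith [trimmedAverage_le_of_forall_le (half_pos hδ).le (htail n)]

lemma tendstoInMeasure_trimmedAverage (hε : ∀ n t, Measurable (ε n t))
    (hmix : Summable (alphaMix μ ε)) {Y : ℕ → ℕ → Ω → ℝ} (hY : UnifIntegrableArray μ k Y)
    (hwin : ∀ n t, k < t → t ≤ n → IsWindowStat ε n h t (Y n t)) {φ : ℝ → ℝ}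
    (hmean : ∀ᵐ u ∂volume.restrict (Ioc (0 : ℝ) 1),
      Tendsto (fun n : ℕ => ∫ ω, Y n ⌈(n : ℝ) * u⌉₊ ω ∂μ) atTop (nhds (φ u))) :
    TendstoInMeasure μ (fun n ω => trimmedAverage k n fun t => Y n t ω) atTop
      fun _ => ∫ u in Ioc (0 : ℝ) 1, φ u := by
  obtain ⟨B, hB⟩ := hY.exists_integral_le
  have hmean_le (n t : ℕ) (hkt : k < t) (htn : t ≤ n) : |∫ ω, Y n t ω ∂μ| ≤ B :=
    (abs_of_nonneg (integral_nonneg (hY.nonneg n t hkt htn))).trans_le (hB n t hkt htn)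
  refine tendstoInMeasure_of_meanAbsDev (fun n => integrable_trimmedAverage (hY.integrable n))
    (tendsto_meanAbsDev_trimmedAverage hε hmix hY hwin) ?_
  simp only [fun n => integral_trimmedAverage (hY.integrable n)]
  exact tendsto_trimmedAverage k hmean_le hmean

end Mixing

lemma UnifIntegrableArray.integral_abs_mul_le [IsFiniteMeasure μ] {Y : ℕ → ℕ → Ω → ℝ}
    (hY : UnifIntegrableArray μ k Y) {n t : ℕ} (hkt : k < t) (htn : t ≤ n) {q : Ω → ℝ}
    (hq : Measurable q) {Q A : ℝ} (hqQ : ∀ ω, |q ω| ≤ Q) :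
    ∫ ω, |Y n t ω * q ω| ∂μ
      ≤ A * ∫ ω, |q ω| ∂μ + Q * ∫ ω, (Y n t ω - min (Y n t ω) A) ∂μ := by
  have hq_int : Integrable (fun ω => |q ω|) μ :=
    Integrable.of_bound hq.abs.aestronglyMeasurable Q
      (ae_of_all _ fun ω => (abs_abs _).trans_le (hqQ ω))
  have htail_int := hY.integrable_tail hkt htn A
  rw [← integral_const_mul, ← integral_const_mul,
    ← integral_add (hq_int.const_mul A) (htail_int.const_mul Q)]
  refine integral_mono_of_nonneg (ae_of_all _ fun ω => abs_nonneg _)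
    ((hq_int.const_mul A).add (htail_int.const_mul Q)) (ae_of_all _ fun ω => ?_)
  have htail0 : 0 ≤ Y n t ω - min (Y n t ω) A := sub_nonneg.2 (min_le_left _ _)
  calc |Y n t ω * q ω| = min (Y n t ω) A * |q ω| + (Y n t ω - min (Y n t ω) A) * |q ω| := by
        rw [abs_mul, abs_of_nonneg (hY.nonneg n t hkt htn ω), ← add_mul, add_sub_cancel]
    _ ≤ A * |q ω| + (Y n t ω - min (Y n t ω) A) * Q :=
        add_le_add (mul_le_mul_of_nonneg_right (min_le_right _ _) (abs_nonneg _))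
          (mul_le_mul_of_nonneg_left (hqQ ω) htail0)
    _ = A * |q ω| + Q * (Y n t ω - min (Y n t ω) A) := by rw [mul_comm Q]

lemma UnifIntegrableArray.integrable_mul {Y : ℕ → ℕ → Ω → ℝ}
    (hY : UnifIntegrableArray μ k Y) {n t : ℕ} (hkt : k < t) (htn : t ≤ n) {q : Ω → ℝ}
    (hq : Measurable q) {Q : ℝ} (hqQ : ∀ ω, |q ω| ≤ Q) :
    Integrable (fun ω => Y n t ω * q ω) μ :=
  (hY.integrable n t hkt htn).mul_bdd hq.aestronglyMeasurable (ae_of_all _ hqQ)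

lemma tendsto_trimmedAverage_integral_abs [IsFiniteMeasure μ] {q : ℕ → ℕ → Ω → ℝ} {Q : ℝ}
    (hq : ∀ n t, Measurable (q n t)) (hqQ : ∀ n t, k < t → t ≤ n → ∀ ω, |q n t ω| ≤ Q)
    (hlim : ∀ᵐ u ∂volume.restrict (Ioc (0 : ℝ) 1),
      TendstoInMeasure μ (fun n => q n ⌈(n : ℝ) * u⌉₊) atTop fun _ => (0 : ℝ)) :
    Tendsto (fun n => trimmedAverage k n fun t => ∫ ω, |q n t ω| ∂μ) atTop (nhds 0) := by
  have hbound (n t : ℕ) (hkt : k < t) (htn : t ≤ n) : |∫ ω, |q n t ω| ∂μ| ≤ Q * μ.real univ :=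
    norm_integral_le_of_norm_le_const (f := fun ω => |q n t ω|) <| ae_of_all _ fun ω =>
      (abs_abs _).trans_le (hqQ n t hkt htn ω)
  have hpoint : ∀ᵐ u ∂volume.restrict (Ioc (0 : ℝ) 1),
      Tendsto (fun n : ℕ => ∫ ω, |q n ⌈(n : ℝ) * u⌉₊ ω| ∂μ) atTop (nhds 0) := by
    filter_upwards [hlim, ae_restrict_mem measurableSet_Ioc] with u hu hu01
    refine tendsto_integral_abs_of_tendstoInMeasure_zero (B := Q)
      (fun n => (hq n _).aestronglyMeasurable) ?_ hu
    filter_upwards [(tendsto_ceil_mul_atTop hu01.1).eventually_gt_atTop k] with n hn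
    exact hqQ n _ hn (ceil_mul_le hu01.2)
  simpa only [integral_zero] using tendsto_trimmedAverage k hbound hpoint

lemma tendstoInMeasure_trimmedAverage_mul_zero [IsFiniteMeasure μ] {Y q : ℕ → ℕ → Ω → ℝ}
    (hY : UnifIntegrableArray μ k Y) {Q : ℝ} (hQ : 0 ≤ Q) (hq : ∀ n t, Measurable (q n t))
    (hqQ : ∀ n t, k < t → t ≤ n → ∀ ω, |q n t ω| ≤ Q)
    (hlim : ∀ᵐ u ∂volume.restrict (Ioc (0 : ℝ) 1),
      TendstoInMeasure μ (fun n => q n ⌈(n : ℝ) * u⌉₊) atTop fun _ => (0 : ℝ)) :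
    TendstoInMeasure μ (fun n ω => trimmedAverage k n fun t => Y n t ω * q n t ω) atTop
      fun _ => (0 : ℝ) := by
  have hint (n t : ℕ) (hkt : k < t) (htn : t ≤ n) : Integrable (fun ω => Y n t ω * q n t ω) μ :=
    hY.integrable_mul hkt htn (hq n t) (hqQ n t hkt htn)
  refine tendstoInMeasure_of_tendsto_integral_abs_sub
    (fun n => integrable_trimmedAverage (hint n)) ?_
  simp only [sub_zero]
  refine tendsto_zero_of_forall_le_add (fun n => integral_nonneg fun _ => abs_nonneg _)
    fun δ hδ => ?_
  obtain ⟨A, -, htail⟩ := hY.exists_truncation (δ / (Q + 1)) (by positivity)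
  refine ⟨_, mul_zero A ▸ (tendsto_trimmedAverage_integral_abs hq hqQ hlim).const_mul A,
    fun n => ?_⟩
  have htail_avg : trimmedAverage k n (fun t => ∫ ω, (Y n t ω - min (Y n t ω) A) ∂μ)
      ≤ δ / (Q + 1) := trimmedAverage_le_of_forall_le (by positivity) (htail n)
  calc ∫ ω, |trimmedAverage k n fun t => Y n t ω * q n t ω| ∂μ
      ≤ ∫ ω, trimmedAverage k n (fun t => |Y n t ω * q n t ω|) ∂μ :=
        integral_mono_of_nonneg (ae_of_all _ fun ω => abs_nonneg _)
          (integrable_trimmedAverage fun t hkt htn => (hint n t hkt htn).abs)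
          (ae_of_all _ fun ω => abs_trimmedAverage_le k n _)
    _ = trimmedAverage k n fun t => ∫ ω, |Y n t ω * q n t ω| ∂μ :=
        integral_trimmedAverage fun t hkt htn => (hint n t hkt htn).abs
    _ ≤ trimmedAverage k n fun t => A * ∫ ω, |q n t ω| ∂μ
          + Q * ∫ ω, (Y n t ω - min (Y n t ω) A) ∂μ :=
        trimmedAverage_mono fun t hkt htn =>
          hY.integral_abs_mul_le hkt htn (hq n t) (hqQ n t hkt htn)
    _ = A * trimmedAverage k n (fun t => ∫ ω, |q n t ω| ∂μ)
          + Q * trimmedAverage k n (fun t => ∫ ω, (Y n t ω - min (Y n t ω) A) ∂μ) := by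
        rw [trimmedAverage_add, trimmedAverage_const_mul, trimmedAverage_const_mul]
    _ ≤ A * trimmedAverage k n (fun t => ∫ ω, |q n t ω| ∂μ) + δ := by
        have hQδ : Q * (δ / (Q + 1)) ≤ δ := by
          rw [mul_div_assoc', div_le_iff₀ (by positivity)]
          nlinarith
        linarith [mul_le_mul_of_nonneg_left htail_avg hQ]

end LawOfLargeNumbers

section KernelSmoothing

/-- A kernel and a bandwidth sequence for which kernel smoothing is consistent. The kernel is not
normalized: the weights `wgt` are invariant under scaling of `K`. -/
structure KernelBandwidth (K : ℝ → ℝ) (b : ℕ → ℝ) : Prop where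
  continuous : Continuous K
  hasCompactSupport : HasCompactSupport K
  nonneg : ∀ z, 0 ≤ K z
  exists_ne_zero : ∃ z, K z ≠ 0
  tendsto_bandwidth : Tendsto b atTop (nhds 0)
  tendsto_mul_bandwidth : Tendsto (fun n : ℕ => (n : ℝ) * b n) atTop atTop

variable {K : ℝ → ℝ} {b : ℕ → ℝ}

lemma tendsto_mul_bandwidth_of_sq (hb_pos : ∀ n, 0 < b n) (hb0 : Tendsto b atTop (nhds 0))
    (hnb : Tendsto (fun n : ℕ => 1 / ((n : ℝ) * b n ^ 2)) atTop (nhds 0)) :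
    Tendsto (fun n : ℕ => (n : ℝ) * b n) atTop atTop := by
  have hpos : ∀ᶠ n : ℕ in atTop, 0 < (n : ℝ) * b n :=
    (eventually_gt_atTop 0).mono fun n hn => mul_pos (mod_cast hn) (hb_pos n)
  have hinv : Tendsto (fun n : ℕ => ((n : ℝ) * b n)⁻¹) atTop (nhds 0) := by
    refine (zero_mul (0 : ℝ) ▸ hnb.mul hb0).congr fun n => ?_
    have hbn := (hb_pos n).ne'
    field_simp
  refine Tendsto.congr (fun n => inv_inv _) (tendsto_inv_nhdsGT_zero.comp
    (tendsto_nhdsWithin_iff.2 ⟨hinv, hpos.mono fun n hn => inv_pos.2 hn⟩))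

lemma KernelBandwidth.of_integral_ne_zero (hK : Continuous K) (hK_supp : HasCompactSupport K)
    (hK0 : ∀ z, 0 ≤ K z) (hK_int : ∫ z, K z ≠ 0) (hb_pos : ∀ n, 0 < b n)
    (hb0 : Tendsto b atTop (nhds 0))
    (hnb : Tendsto (fun n : ℕ => 1 / ((n : ℝ) * b n ^ 2)) atTop (nhds 0)) :
    KernelBandwidth K b where
  continuous := hK
  hasCompactSupport := hK_supp
  nonneg := hK0
  exists_ne_zero := by
    contrapose! hK_int
    simp only [hK_int, integral_zero]
  tendsto_bandwidth := hb0
  tendsto_mul_bandwidth := tendsto_mul_bandwidth_of_sq hb_pos hb0 hnb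

lemma exists_Icc_le_of_continuous (hK : Continuous K) (hK0 : ∀ z, 0 ≤ K z) (hne : ∃ z, K z ≠ 0) :
    ∃ p q κ : ℝ, p < q ∧ 0 < κ ∧ ∀ z ∈ Icc p q, z ≠ 0 ∧ κ ≤ K z := by
  obtain ⟨z₀, hz₀⟩ := hne
  obtain ⟨z, hz, hz0⟩ := (dense_compl_singleton (0 : ℝ)).inter_open_nonempty _
    (isOpen_lt continuous_const hK) ⟨z₀, (hK0 z₀).lt_of_ne' hz₀⟩
  have hnear : ∀ᶠ y in nhds z, y ≠ 0 ∧ K z / 2 ≤ K y :=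
    (eventually_ne_nhds hz0).and ((hK.tendsto z).eventually_const_le (half_lt_self hz))
  obtain ⟨r, hr, hball⟩ := Metric.nhds_basis_closedBall.mem_iff.1 hnear
  rw [Real.closedBall_eq_Icc] at hball
  exact ⟨z - r, z + r, K z / 2, by linarith, half_pos hz, hball⟩

lemma sub_one_le_card_Icc_ceil_floor {x : ℝ} (hx : 0 ≤ x) (y : ℝ) :
    y - x - 1 ≤ (Finset.Icc ⌈x⌉₊ ⌊y⌋₊).card := by
  have hcard : (⌊y⌋₊ : ℝ) + 1 ≤ (Finset.Icc ⌈x⌉₊ ⌊y⌋₊).card + ⌈x⌉₊ := by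
    rw [Nat.card_Icc]
    exact_mod_cast le_tsub_add
  linarith [Nat.lt_floor_add_one y, Nat.ceil_lt_add_one hx]

lemma Kw_nonneg (hK0 : ∀ z, 0 ≤ K z) (b : ℕ → ℝ) (n t i : ℕ) : 0 ≤ Kw K b n t i := by
  rw [Kw]
  split_ifs
  exacts [le_rfl, hK0 _]

lemma wgt_nonneg (hK0 : ∀ z, 0 ≤ K z) (b : ℕ → ℝ) (n t j : ℕ) : 0 ≤ wgt K b n t j :=
  div_nonneg (Kw_nonneg hK0 b n t j) (Finset.sum_nonneg fun i _ => Kw_nonneg hK0 b n t i)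

lemma le_sum_Kw (hK0 : ∀ z, 0 ≤ K z) {p q κ : ℝ} (hκ : 0 ≤ κ)
    (hpq : ∀ z ∈ Icc p q, z ≠ 0 ∧ κ ≤ K z) {n t : ℕ} (hnb : 0 < (n : ℝ) * b n)
    (hlo : 0 < (t : ℝ) - q * (n * b n)) (hhi0 : 0 ≤ (t : ℝ) - p * (n * b n))
    (hhi : (t : ℝ) - p * (n * b n) ≤ n) :
    κ * ((q - p) * (n * b n) - 1) ≤ ∑ i ∈ Finset.Icc 1 n, Kw K b n t i := by
  set s := Finset.Icc ⌈(t : ℝ) - q * (n * b n)⌉₊ ⌊(t : ℝ) - p * (n * b n)⌋₊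
  have hsub : s ⊆ Finset.Icc 1 n :=
    Finset.Icc_subset_Icc (Nat.one_le_ceil_iff.2 hlo) (Nat.floor_le_of_le hhi)
  have hterm : ∀ i ∈ s, κ ≤ Kw K b n t i := by
    intro i hi
    obtain ⟨hli, hiu⟩ := Finset.mem_Icc.1 hi
    rw [Nat.ceil_le] at hli
    rw [Nat.le_floor_iff hhi0] at hiu
    have hmem : ((t : ℝ) - i) / (n * b n) ∈ Icc p q := by
      rw [mem_Icc, le_div_iff₀ hnb, div_le_iff₀ hnb]
      constructor <;> linarith
    obtain ⟨hne, hle⟩ := hpq _ hmem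
    have hti : t ≠ i := by
      rintro rfl
      exact hne (by rw [sub_self, zero_div])
    rwa [Kw, if_neg hti]
  have hcard := sub_one_le_card_Icc_ceil_floor hlo.le ((t : ℝ) - p * (n * b n))
  calc κ * ((q - p) * (n * b n) - 1) ≤ s.card • κ := by
        rw [nsmul_eq_mul, mul_comm]
        exact mul_le_mul_of_nonneg_right (by linarith) hκ
    _ ≤ ∑ i ∈ s, Kw K b n t i := Finset.card_nsmul_le_sum _ _ _ hterm
    _ ≤ ∑ i ∈ Finset.Icc 1 n, Kw K b n t i :=
        Finset.sum_le_sum_of_subset_of_nonneg hsub fun i _ _ => Kw_nonneg hK0 b n t i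

namespace KernelBandwidth

variable {u : ℝ} {t : ℕ → ℕ}

lemma exists_le_sum_Kw (hKb : KernelBandwidth K b) (hu : u ∈ Ioo (0 : ℝ) 1)
    (ht : Tendsto (fun n => (t n : ℝ) / n) atTop (nhds u)) :
    ∃ κ > 0, ∀ᶠ n : ℕ in atTop, κ * (n * b n) ≤ ∑ i ∈ Finset.Icc 1 n, Kw K b n (t n) i := by
  obtain ⟨p, q, κ, hpq, hκ, hIcc⟩ :=
    exists_Icc_le_of_continuous hKb.continuous hKb.nonneg hKb.exists_ne_zero
  have hqp : 0 < q - p := sub_pos.2 hpq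
  refine ⟨κ * ((q - p) / 2), by positivity, ?_⟩
  have hend (z : ℝ) : Tendsto (fun n => (t n : ℝ) / n - z * b n) atTop (nhds u) := by
    simpa only [mul_zero, sub_zero] using ht.sub (hKb.tendsto_bandwidth.const_mul z)
  have hscale {n : ℕ} (hn : 0 < n) (z : ℝ) :
      (t n : ℝ) - z * (n * b n) = n * ((t n : ℝ) / n - z * b n) := by
    have hn' : (n : ℝ) ≠ 0 := mod_cast hn.ne'
    field_simp
  filter_upwards [(hend q).eventually_const_lt hu.1, (hend p).eventually_const_lt hu.1,
    (hend p).eventually_lt_const hu.2, hKb.tendsto_mul_bandwidth.eventually_ge_atTop (2 / (q - p)),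
    hKb.tendsto_mul_bandwidth.eventually_gt_atTop 0, eventually_gt_atTop 0]
    with n hq hp hp1 hbig hnb hn
  have hn' : (0 : ℝ) < n := mod_cast hn
  rw [div_le_iff₀' hqp] at hbig
  have hsum := le_sum_Kw hKb.nonneg hκ.le hIcc hnb (hscale hn q ▸ mul_pos hn' hq)
    (hscale hn p ▸ (mul_pos hn' hp).le) (hscale hn p ▸ mul_le_of_le_one_right hn'.le hp1.le)
  refine le_trans ?_ hsum
  rw [mul_assoc]
  exact mul_le_mul_of_nonneg_left (by linarith) hκ.le

lemma exists_wgt_le (hKb : KernelBandwidth K b) (hu : u ∈ Ioo (0 : ℝ) 1)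
    (ht : Tendsto (fun n => (t n : ℝ) / n) atTop (nhds u)) :
    ∃ C, ∀ᶠ n : ℕ in atTop, ∀ j, wgt K b n (t n) j ≤ C / (n * b n) := by
  obtain ⟨R, hR⟩ := hKb.hasCompactSupport.exists_bound_of_continuous hKb.continuous
  have hR0 : 0 ≤ R := (norm_nonneg _).trans (hR 0)
  obtain ⟨κ, hκ, hsum⟩ := hKb.exists_le_sum_Kw hu ht
  refine ⟨R / κ, ?_⟩
  filter_upwards [hsum, hKb.tendsto_mul_bandwidth.eventually_gt_atTop 0] with n hn hnb j
  have hKw : Kw K b n (t n) j ≤ R := by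
    rw [Kw]
    split_ifs
    exacts [hR0, (le_abs_self _).trans (hR _)]
  rw [wgt, div_div]
  exact div_le_div₀ hR0 hKw (mul_pos hκ hnb) hn

lemma eventually_wgt_eq_zero (hKb : KernelBandwidth K b)
    (ht : Tendsto (fun n => (t n : ℝ) / n) atTop (nhds u)) {δ : ℝ} (hδ : 0 < δ) :
    ∀ᶠ n : ℕ in atTop, ∀ j : ℕ, δ ≤ |(j : ℝ) / n - u| → wgt K b n (t n) j = 0 := by
  obtain ⟨L, hL⟩ := hKb.hasCompactSupport.isCompact.isBounded.exists_norm_le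
  have hlim : Tendsto (fun n => L * b n + |(t n : ℝ) / n - u|) atTop (nhds 0) := by
    simpa only [mul_zero, sub_self, abs_zero, add_zero] using
      (hKb.tendsto_bandwidth.const_mul L).add (ht.sub_const u).abs
  filter_upwards [hlim.eventually_lt_const hδ, eventually_gt_atTop 0,
    hKb.tendsto_mul_bandwidth.eventually_gt_atTop 0] with n hclose hn hnb j hj
  have hn' : (0 : ℝ) < n := mod_cast hn
  suffices hKw : Kw K b n (t n) j = 0 by rw [wgt, hKw, zero_div]
  by_contra hKw
  rw [Kw, ite_eq_left_iff, Classical.not_imp] at hKw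
  have hsupp := hL _ (subset_tsupport K hKw.2)
  rw [Real.norm_eq_abs, abs_div, abs_of_pos hnb, div_le_iff₀ hnb] at hsupp
  have hdist : |(j : ℝ) / n - (t n : ℝ) / n| ≤ L * b n := by
    rw [← sub_div, abs_div, abs_of_pos hn', div_le_iff₀ hn', abs_sub_comm]
    linarith
  linarith [abs_sub_le ((j : ℝ) / n) ((t n : ℝ) / n) u]

lemma eventually_sum_wgt (hKb : KernelBandwidth K b) (hu : u ∈ Ioo (0 : ℝ) 1)
    (ht : Tendsto (fun n => (t n : ℝ) / n) atTop (nhds u)) (h : ℕ) :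
    ∀ᶠ n : ℕ in atTop, ∑ j ∈ Finset.Icc (h + 1) n, wgt K b n (t n) j = 1 := by
  obtain ⟨κ, hκ, hsum⟩ := hKb.exists_le_sum_Kw hu ht
  have hhalf := half_pos hu.1
  filter_upwards [hsum, hKb.tendsto_mul_bandwidth.eventually_gt_atTop 0,
    hKb.eventually_wgt_eq_zero ht hhalf,
    (tendsto_const_div_atTop_nhds_zero_nat (h : ℝ)).eventually_lt_const hhalf]
    with n hn hnb hzero hsmall
  have hfull : ∑ j ∈ Finset.Icc 1 n, wgt K b n (t n) j = 1 := by
    simp only [wgt]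
    rw [← Finset.sum_div, div_self ((mul_pos hκ hnb).trans_le hn).ne']
  rw [← hfull]
  refine Finset.sum_subset (Finset.Icc_subset_Icc_left (Nat.le_add_left 1 h))
    fun j hj hj' => hzero j ?_
  have hjh : j ≤ h := by
    rw [Finset.mem_Icc] at hj hj'
    omega
  have hjn : (j : ℝ) / n ≤ h / n := by gcongr
  rw [abs_sub_comm]
  exact le_trans (by linarith) (le_abs_self _)

lemma tendsto_sum_wgt_mul (hKb : KernelBandwidth K b) (hu : u ∈ Ioo (0 : ℝ) 1)
    (ht : Tendsto (fun n => (t n : ℝ) / n) atTop (nhds u)) {F : ℝ → ℝ} (hF : ContinuousAt F u)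
    (h : ℕ) :
    Tendsto (fun n : ℕ => ∑ j ∈ Finset.Icc (h + 1) n, wgt K b n (t n) j * F ((j : ℝ) / n)) atTop
      (nhds (F u)) := by
  rw [Metric.tendsto_nhds]
  intro e he
  obtain ⟨δ, hδ, hFδ⟩ := Metric.continuousAt_iff.1 hF (e / 2) (half_pos he)
  filter_upwards [hKb.eventually_sum_wgt hu ht h, hKb.eventually_wgt_eq_zero ht hδ]
    with n hsum hzero
  have hterm (j : ℕ) : |wgt K b n (t n) j * (F ((j : ℝ) / n) - F u)|
      ≤ wgt K b n (t n) j * (e / 2) := by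
    have hw := wgt_nonneg hKb.nonneg b n (t n) j
    rw [abs_mul, abs_of_nonneg hw]
    rcases le_or_gt δ |(j : ℝ) / n - u| with hfar | hnear
    · rw [hzero j hfar, zero_mul, zero_mul]
    · exact mul_le_mul_of_nonneg_left (hFδ hnear).le hw
  calc dist (∑ j ∈ Finset.Icc (h + 1) n, wgt K b n (t n) j * F ((j : ℝ) / n)) (F u)
      = |∑ j ∈ Finset.Icc (h + 1) n, wgt K b n (t n) j * (F ((j : ℝ) / n) - F u)| := by
        simp only [mul_sub, Finset.sum_sub_distrib, ← Finset.sum_mul, hsum, one_mul, Real.dist_eq]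
    _ ≤ ∑ j ∈ Finset.Icc (h + 1) n, wgt K b n (t n) j * (e / 2) :=
        (Finset.abs_sum_le_sum_abs _ _).trans (Finset.sum_le_sum fun j _ => hterm j)
    _ = e / 2 := by rw [← Finset.sum_mul, hsum, one_mul]
    _ < e := half_lt_self he

variable {Ω : Type*} [MeasurableSpace Ω] {μ : Measure Ω} [IsProbabilityMeasure μ]
  {ε : ℕ → ℕ → Ω → ℝ} {X : ℕ → ℕ → Ω → ℝ} {h : ℕ} {A : ℝ}

lemma tendsto_variance_sum_wgt_mul (hKb : KernelBandwidth K b) (hu : u ∈ Ioo (0 : ℝ) 1)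
    (ht : Tendsto (fun n => (t n : ℝ) / n) atTop (nhds u)) (hε : ∀ n t, Measurable (ε n t))
    (hmix : Summable (alphaMix μ ε)) (hA : 0 ≤ A)
    (hX : ∀ n j, h < j → j ≤ n → IsWindowStat ε n h j (X n j))
    (hXA : ∀ n j, h < j → j ≤ n → ∀ ω, X n j ω ∈ Icc 0 A) :
    Tendsto (fun n => Var[fun ω => ∑ j ∈ Finset.Icc (h + 1) n, wgt K b n (t n) j * X n j ω; μ])
      atTop (nhds 0) := by
  obtain ⟨C, hC⟩ := hKb.exists_wgt_le hu ht
  refine squeeze_zero' (Eventually.of_forall fun n => variance_nonneg _ _) ?_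
    (zero_mul (2 * (A ^ 2 * ∑' d, windowMix μ ε h d)) ▸
      (hKb.tendsto_mul_bandwidth.const_div_atTop C).mul_const _)
  filter_upwards [hC, hKb.eventually_sum_wgt hu ht h] with n hwC hsum
  have hvar := variance_weightedSum_windowStat_le (s := Finset.Icc (h + 1) n) hε hmix hA
    (fun j hj => hX n j (Finset.mem_Icc.1 hj).1 (Finset.mem_Icc.1 hj).2)
    (fun j hj => hXA n j (Finset.mem_Icc.1 hj).1 (Finset.mem_Icc.1 hj).2)
    (fun j _ => wgt_nonneg hKb.nonneg b n (t n) j) fun j _ => hwC j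
  rwa [hsum, mul_one] at hvar

lemma tendstoInMeasure_sum_wgt_mul (hKb : KernelBandwidth K b) (hu : u ∈ Ioo (0 : ℝ) 1)
    (ht : Tendsto (fun n => (t n : ℝ) / n) atTop (nhds u)) (hε : ∀ n t, Measurable (ε n t))
    (hmix : Summable (alphaMix μ ε)) (hA : 0 ≤ A)
    (hX : ∀ n j, h < j → j ≤ n → IsWindowStat ε n h j (X n j))
    (hXA : ∀ n j, h < j → j ≤ n → ∀ ω, X n j ω ∈ Icc 0 A) {F : ℝ → ℝ} (hF : ContinuousAt F u)
    (hmean : ∀ n j, h < j → j ≤ n → ∫ ω, X n j ω ∂μ = F ((j : ℝ) / n)) :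
    TendstoInMeasure μ (fun n ω => ∑ j ∈ Finset.Icc (h + 1) n, wgt K b n (t n) j * X n j ω) atTop
      fun _ => F u := by
  have hrange {n j : ℕ} (hj : j ∈ Finset.Icc (h + 1) n) : h < j ∧ j ≤ n := Finset.mem_Icc.1 hj
  have hmem (n j : ℕ) (hj : j ∈ Finset.Icc (h + 1) n) :
      MemLp (fun ω => wgt K b n (t n) j * X n j ω) 2 μ :=
    (memLp_of_bounded (ae_of_all _ (hXA n j (hrange hj).1 (hrange hj).2))
      ((hX n j (hrange hj).1 (hrange hj).2).measurable hε).aestronglyMeasurable 2).const_mul _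
  have hint (n j : ℕ) (hj : j ∈ Finset.Icc (h + 1) n) := (hmem n j hj).integrable one_le_two
  refine tendstoInMeasure_of_meanAbsDev (fun n => integrable_finsetSum _ (hint n))
    (tendsto_meanAbsDev_of_tendsto_variance (fun n => memLp_finsetSum _ (hmem n))
      (hKb.tendsto_variance_sum_wgt_mul hu ht hε hmix hA hX hXA)) ?_
  refine (hKb.tendsto_sum_wgt_mul hu ht hF h).congr fun n => ?_
  rw [integral_finsetSum _ (hint n)]
  refine Finset.sum_congr rfl fun j hj => ?_
  rw [integral_const_mul, hmean n j (hrange hj).1 (hrange hj).2]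

end KernelBandwidth

end KernelSmoothing

section ZeroReturns

variable {Ω : Type*} {v : ℝ → ℝ} {ε : ℕ → ℕ → Ω → ℝ} {K : ℝ → ℝ} {b : ℕ → ℝ} {n t : ℕ}

lemma natCast_div_mem_Ioc (ht : 0 < t) (htn : t ≤ n) : (t : ℝ) / n ∈ Ioc (0 : ℝ) 1 :=
  ⟨div_pos (mod_cast ht) (mod_cast ht.trans_le htn),
    div_le_one_of_le₀ (mod_cast htn) n.cast_nonneg⟩

lemma aproc_eq_zero_or_one (v : ℝ → ℝ) (ε : ℕ → ℕ → Ω → ℝ) (n t : ℕ) (ω : Ω) :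
    aproc v ε n t ω = 0 ∨ aproc v ε n t ω = 1 := by
  rw [aproc]
  exact (ite_eq_or_eq _ _ _).symm

lemma aproc_mem_Icc (v : ℝ → ℝ) (ε : ℕ → ℕ → Ω → ℝ) (n t : ℕ) (ω : Ω) :
    aproc v ε n t ω ∈ Icc (0 : ℝ) 1 := by
  rcases aproc_eq_zero_or_one v ε n t ω with h0 | h1
  · rw [h0]
    exact left_mem_Icc.2 zero_le_one
  · rw [h1]
    exact right_mem_Icc.2 zero_le_one

/-- The indicator `a_t a_{t-h}` that the returns at times `t` and `t - h` are both nonzero. -/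
noncomputable def jointIndicator (v : ℝ → ℝ) (ε : ℕ → ℕ → Ω → ℝ) (n h t : ℕ) (ω : Ω) : ℝ :=
  aproc v ε n t ω * aproc v ε n (t - h) ω

lemma jointIndicator_zero (v : ℝ → ℝ) (ε : ℕ → ℕ → Ω → ℝ) (n t : ℕ) :
    jointIndicator v ε n 0 t = aproc v ε n t := by
  ext ω
  rw [jointIndicator, Nat.sub_zero]
  rcases aproc_eq_zero_or_one v ε n t ω with h0 | h1
  · rw [h0, mul_zero]
  · rw [h1, mul_one]

lemma jointIndicator_eq_zero_or_one (v : ℝ → ℝ) (ε : ℕ → ℕ → Ω → ℝ) (n h t : ℕ) (ω : Ω) :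
    jointIndicator v ε n h t ω = 0 ∨ jointIndicator v ε n h t ω = 1 := by
  rw [jointIndicator]
  rcases aproc_eq_zero_or_one v ε n t ω with h0 | h1
  · exact Or.inl (by rw [h0, zero_mul])
  · rw [h1, one_mul]
    exact aproc_eq_zero_or_one v ε n (t - h) ω

lemma jointIndicator_mem_Icc (v : ℝ → ℝ) (ε : ℕ → ℕ → Ω → ℝ) (n h t : ℕ) (ω : Ω) :
    jointIndicator v ε n h t ω ∈ Icc (0 : ℝ) 1 :=
  unitInterval.mul_mem (aproc_mem_Icc v ε n t ω) (aproc_mem_Icc v ε n (t - h) ω)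

lemma jointIndicator_le_aproc (v : ℝ → ℝ) (ε : ℕ → ℕ → Ω → ℝ) (n h t : ℕ) (ω : Ω) :
    jointIndicator v ε n h t ω ≤ aproc v ε n t ω :=
  mul_le_of_le_one_right (aproc_mem_Icc v ε n t ω).1 (aproc_mem_Icc v ε n (t - h) ω).2

lemma phat2_zero (v : ℝ → ℝ) (ε : ℕ → ℕ → Ω → ℝ) (K : ℝ → ℝ) (b : ℕ → ℝ) (n t : ℕ) :
    phat2 v ε K b n 0 t = phat v ε K b n t := by
  ext ω
  exact Finset.sum_congr rfl fun j _ =>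
    congrArg (wgt K b n t j * ·) (congrFun (jointIndicator_zero v ε n j) ω)

lemma phat2_nonneg (v : ℝ → ℝ) (ε : ℕ → ℕ → Ω → ℝ) (hK0 : ∀ z, 0 ≤ K z) (b : ℕ → ℝ)
    (n h t : ℕ) (ω : Ω) : 0 ≤ phat2 v ε K b n h t ω :=
  Finset.sum_nonneg fun j _ =>
    mul_nonneg (wgt_nonneg hK0 b n t j) (jointIndicator_mem_Icc v ε n h j ω).1

lemma phat2_le_phat (v : ℝ → ℝ) (ε : ℕ → ℕ → Ω → ℝ) (hK0 : ∀ z, 0 ≤ K z) (b : ℕ → ℝ)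
    (n h t : ℕ) (ω : Ω) : phat2 v ε K b n h t ω ≤ phat v ε K b n t ω :=
  calc phat2 v ε K b n h t ω
      ≤ ∑ j ∈ Finset.Icc (h + 1) n, wgt K b n t j * aproc v ε n j ω :=
        Finset.sum_le_sum fun j _ =>
          mul_le_mul_of_nonneg_left (jointIndicator_le_aproc v ε n h j ω) (wgt_nonneg hK0 b n t j)
    _ ≤ phat v ε K b n t ω :=
        Finset.sum_le_sum_of_subset_of_nonneg (Finset.Icc_subset_Icc_left (Nat.le_add_left 1 h))
          fun j _ _ => mul_nonneg (wgt_nonneg hK0 b n t j) (aproc_mem_Icc v ε n j ω).1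

/-- The estimator `p̂_{t,t-h} / p̂_t` of `P(a_{t-h} = 1 | a_t = 1)`. The convention that it vanishes
where `p̂_t = 0` agrees with `x / 0 = 0`. -/
noncomputable def phatRatio (v : ℝ → ℝ) (ε : ℕ → ℕ → Ω → ℝ) (K : ℝ → ℝ) (b : ℕ → ℝ)
    (n h t : ℕ) (ω : Ω) : ℝ :=
  phat2 v ε K b n h t ω / phat v ε K b n t ω

lemma phatRatio_mem_Icc (v : ℝ → ℝ) (ε : ℕ → ℕ → Ω → ℝ) (hK0 : ∀ z, 0 ≤ K z) (b : ℕ → ℝ)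
    (n h t : ℕ) (ω : Ω) : phatRatio v ε K b n h t ω ∈ Icc (0 : ℝ) 1 := by
  have hnonneg := phat2_nonneg v ε hK0 b n h t ω
  have hle := phat2_le_phat v ε hK0 b n h t ω
  exact ⟨div_nonneg hnonneg (hnonneg.trans hle), div_le_one_of_le₀ hle (hnonneg.trans hle)⟩

lemma gammaAr2_eq_trimmedAverage (v : ℝ → ℝ) (ε : ℕ → ℕ → Ω → ℝ) (K : ℝ → ℝ) (b : ℕ → ℝ)
    (n h : ℕ) (ω : Ω) : gammaAr2 v ε K b n h ω =
      trimmedAverage h n fun t => rproc v ε n t ω ^ 2 * phatRatio v ε K b n h t ω := by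
  rw [gammaAr2, trimmedAverage]
  congr! with t _
  split_ifs with hzero
  · rw [phatRatio, hzero, div_zero]
  · rfl

lemma DeltaHat_eq_trimmedAverage (v : ℝ → ℝ) (ε : ℕ → ℕ → Ω → ℝ) (K : ℝ → ℝ) (b : ℕ → ℝ)
    (n h : ℕ) (ω : Ω) : DeltaHat v ε K b n h ω =
      trimmedAverage 0 n (fun t => rproc v ε n t ω ^ 2) / gammaAr2 v ε K b n h ω -
        trimmedAverage 0 n (fun t => jointIndicator v ε n 0 t ω) /
          trimmedAverage h n (fun t => jointIndicator v ε n h t ω) := by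
  simp only [jointIndicator_zero, trimmedAverage, Nat.cast_zero, sub_zero, zero_add]
  rfl

lemma isWindowStat_rproc (v : ℝ → ℝ) (ε : ℕ → ℕ → Ω → ℝ) (n t : ℕ) :
    IsWindowStat ε n 0 t (rproc v ε n t) :=
  (IsWindowStat.eps ε n le_rfl t).comp (measurable_const_mul (v ((t : ℝ) / n)))

lemma isWindowStat_aproc (v : ℝ → ℝ) (ε : ℕ → ℕ → Ω → ℝ) (n : ℕ) {h i : ℕ} (hi : i ≤ h) (t : ℕ) :
    IsWindowStat ε n h t (aproc v ε n (t - i)) :=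
  (IsWindowStat.eps ε n hi t).comp
    (f := fun x => if v (((t - i : ℕ) : ℝ) / n) * x ≠ 0 then 1 else 0)
    (Measurable.ite ((measurable_const_mul _) (measurableSet_singleton 0)).compl measurable_const
      measurable_const)

lemma isWindowStat_jointIndicator (v : ℝ → ℝ) (ε : ℕ → ℕ → Ω → ℝ) (n h t : ℕ) :
    IsWindowStat ε n h t (jointIndicator v ε n h t) :=
  (isWindowStat_aproc v ε n h.zero_le t).mul (isWindowStat_aproc v ε n le_rfl t)

variable [MeasurableSpace Ω]

lemma measurable_jointIndicator (v : ℝ → ℝ) (hε : ∀ n t, Measurable (ε n t)) (n h t : ℕ) :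
    Measurable (jointIndicator v ε n h t) :=
  (isWindowStat_jointIndicator v ε n h t).measurable hε

lemma measurable_phat2 (v : ℝ → ℝ) (hε : ∀ n t, Measurable (ε n t)) (K : ℝ → ℝ) (b : ℕ → ℝ)
    (n h t : ℕ) : Measurable (phat2 v ε K b n h t) :=
  Finset.measurable_fun_sum _ fun j _ => (measurable_jointIndicator v hε n h j).const_mul _

lemma measurable_phatRatio (v : ℝ → ℝ) (hε : ∀ n t, Measurable (ε n t)) (K : ℝ → ℝ) (b : ℕ → ℝ)
    (n h t : ℕ) : Measurable (phatRatio v ε K b n h t) :=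
  (measurable_phat2 v hε K b n h t).div
    (phat2_zero v ε K b n t ▸ measurable_phat2 v hε K b n 0 t)

lemma integral_jointIndicator (μ : Measure Ω) (v : ℝ → ℝ) (hε : ∀ n t, Measurable (ε n t))
    (n h t : ℕ) :
    ∫ ω, jointIndicator v ε n h t ω ∂μ = μ.real {ω | jointIndicator v ε n h t ω = 1} := by
  have hmeas : MeasurableSet {ω | jointIndicator v ε n h t ω = 1} :=
    measurable_jointIndicator v hε n h t (measurableSet_singleton (1 : ℝ))
  rw [← integral_indicator_one hmeas]
  congr 1 with ω
  rcases jointIndicator_eq_zero_or_one v ε n h t ω with h0 | h1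
  · rw [indicator_of_notMem (by simp only [mem_ofPred_eq, h0, zero_ne_one, not_false_eq_true]), h0]
  · rw [indicator_of_mem (by exact h1), h1, Pi.one_apply]

variable {μ : Measure Ω}

lemma integral_sq_cond_aproc (hv : v ((t : ℝ) / n) ≠ 0) :
    ∫ ω, ε n t ω ^ 2 ∂(μ[|{ω | aproc v ε n t ω = 1}]) =
      (μ.real {ω | aproc v ε n t ω = 1})⁻¹ * ∫ ω, ε n t ω ^ 2 ∂μ := by
  have hoff : ∀ ω ∉ {ω | aproc v ε n t ω = 1}, ε n t ω ^ 2 = 0 := fun ω hω => by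
    by_contra hne
    exact hω (if_pos (mul_ne_zero hv (pow_ne_zero_iff two_ne_zero |>.1 hne)))
  rw [ProbabilityTheory.cond, integral_smul_measure,
    setIntegral_eq_integral_of_forall_compl_eq_zero hoff, ENNReal.toReal_inv, smul_eq_mul,
    Measure.real]

/-- The zero-returns model with mixing: `v` is the scale of the returns `v (t/n) * ε n t`, and
`g h (t/n)`, for `h ≤ m`, is the probability that the returns at `t` and `t - h` are both nonzero.
-/
structure ZeroReturnsModel (μ : Measure Ω) (m : ℕ) (v : ℝ → ℝ) (g : ℕ → ℝ → ℝ)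
    (ε : ℕ → ℕ → Ω → ℝ) : Prop where
  v_ne_zero : ∀ s ∈ Ioc (0 : ℝ) 1, v s ≠ 0
  v_bounded : ∃ M, ∀ s ∈ Ioc (0 : ℝ) 1, |v s| ≤ M
  v_aeContinuous : AEContinuous01 v
  g_pos : ∀ h ≤ m, ∀ s ∈ Ioc (0 : ℝ) 1, 0 < g h s
  g_aeContinuous : ∀ h ≤ m, AEContinuous01 (g h)
  measurable_eps : ∀ n t, Measurable (ε n t)
  prob_jointIndicator : ∀ h ≤ m, ∀ n t : ℕ, h < t → t ≤ n →
    μ.real {ω | jointIndicator v ε n h t ω = 1} = g h ((t : ℝ) / n)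
  cond_second_moment : ∀ n t : ℕ, 0 < t → t ≤ n →
    ∫ ω, ε n t ω ^ 2 ∂(μ[|{ω | aproc v ε n t ω = 1}]) = 1
  unifIntegrable_sq : UnifIntegrableArray μ 0 fun n t ω => ε n t ω ^ 2
  summable_alphaMix : Summable (alphaMix μ ε)

lemma unifIntegrableArray_sq_of_moment [IsFiniteMeasure μ] (hε : ∀ n t, Measurable (ε n t))
    {ν M : ℝ} (hν : 0 < ν) (hmom : ∀ n t : ℕ, 1 ≤ t → t ≤ n →
      ∫⁻ ω, ENNReal.ofReal (|ε n t ω| ^ (2 + 2 * ν)) ∂μ ≤ ENNReal.ofReal M) :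
    UnifIntegrableArray μ 0 fun n t ω => ε n t ω ^ 2 := by
  refine .of_moment (M := M) hν (fun n t => (hε n t).pow_const 2) (fun n t ω => sq_nonneg _)
    fun n t ht htn => ?_
  have hpow (x : ℝ) : (x ^ 2) ^ (1 + ν) = |x| ^ (2 + 2 * ν) := by
    rw [← sq_abs, ← Real.rpow_natCast, ← Real.rpow_mul (abs_nonneg x)]
    congr 1
    push_cast
    ring
  simpa only [hpow] using hmom n t ht htn

namespace ZeroReturnsModel

variable {m h : ℕ} {g : ℕ → ℝ → ℝ}

lemma integral_jointIndicator_eq (hM : ZeroReturnsModel μ m v g ε) (hh : h ≤ m) (ht : h < t)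
    (htn : t ≤ n) : ∫ ω, jointIndicator v ε n h t ω ∂μ = g h ((t : ℝ) / n) :=
  (integral_jointIndicator μ v hM.measurable_eps n h t).trans
    (hM.prob_jointIndicator h hh n t ht htn)

lemma g_ratio_aeContinuous (hM : ZeroReturnsModel μ m v g ε) (hh : h ≤ m) :
    AEContinuous01 fun s => g h s / g 0 s := by
  filter_upwards [hM.g_aeContinuous h hh, hM.g_aeContinuous 0 m.zero_le,
    ae_restrict_mem measurableSet_Ioc] with u hgh hg0 hu
  exact hgh.div hg0 (hM.g_pos 0 m.zero_le u hu).ne'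

lemma v_sq_mul_g_aeContinuous (hM : ZeroReturnsModel μ m v g ε) (hh : h ≤ m) :
    AEContinuous01 fun s => v s ^ 2 * g h s := by
  filter_upwards [hM.v_aeContinuous, hM.g_aeContinuous h hh] with u hv hg
  exact (hv.pow 2).mul hg

lemma exists_v_sq_le (hM : ZeroReturnsModel μ m v g ε) :
    ∃ B ≥ 0, ∀ s ∈ Ioc (0 : ℝ) 1, v s ^ 2 ≤ B := by
  obtain ⟨M, hvM⟩ := hM.v_bounded
  exact ⟨M ^ 2, sq_nonneg M, fun s hs => sq_le_sq.2 ((hvM s hs).trans (le_abs_self M))⟩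

lemma integral_rproc_sq (hM : ZeroReturnsModel μ m v g ε) (ht : 0 < t) (htn : t ≤ n) :
    ∫ ω, rproc v ε n t ω ^ 2 ∂μ = v ((t : ℝ) / n) ^ 2 * g 0 ((t : ℝ) / n) := by
  have hmem := natCast_div_mem_Ioc ht htn
  have hprob := hM.prob_jointIndicator 0 m.zero_le n t ht htn
  have hcond := hM.cond_second_moment n t ht htn
  rw [jointIndicator_zero] at hprob
  rw [integral_sq_cond_aproc (hM.v_ne_zero _ hmem), hprob,
    inv_mul_eq_one₀ (hM.g_pos 0 m.zero_le _ hmem).ne'] at hcond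
  simp only [rproc, mul_pow, integral_const_mul, hcond]

variable [IsProbabilityMeasure μ]

lemma g_grid_le_one (hM : ZeroReturnsModel μ m v g ε) (hh : h ≤ m) (ht : h < t) (htn : t ≤ n) :
    g h ((t : ℝ) / n) ≤ 1 :=
  (hM.prob_jointIndicator h hh n t ht htn).symm.trans_le measureReal_le_one

lemma g_grid_le_g_zero (hM : ZeroReturnsModel μ m v g ε) (hh : h ≤ m) (ht : h < t) (htn : t ≤ n) :
    g h ((t : ℝ) / n) ≤ g 0 ((t : ℝ) / n) := by
  rw [← hM.integral_jointIndicator_eq hh ht htn,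
    ← hM.integral_jointIndicator_eq m.zero_le (Nat.zero_lt_of_lt ht) htn]
  have hint (i : ℕ) : Integrable (jointIndicator v ε n i t) μ :=
    integrable_of_measurable_of_mem_Icc (measurable_jointIndicator v hM.measurable_eps n i t)
      (jointIndicator_mem_Icc v ε n i t)
  refine integral_mono (hint h) (hint 0) fun ω => ?_
  rw [jointIndicator_zero]
  exact jointIndicator_le_aproc v ε n h t ω

lemma g_ratio_mem_Icc (hM : ZeroReturnsModel μ m v g ε) (hh : h ≤ m) (ht : h < t) (htn : t ≤ n) :
    g h ((t : ℝ) / n) / g 0 ((t : ℝ) / n) ∈ Icc (0 : ℝ) 1 := by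
  have hmem := natCast_div_mem_Ioc (Nat.zero_lt_of_lt ht) htn
  have hpos := hM.g_pos 0 m.zero_le _ hmem
  exact ⟨div_nonneg (hM.g_pos h hh _ hmem).le hpos.le,
    div_le_one_of_le₀ (hM.g_grid_le_g_zero hh ht htn) hpos.le⟩

lemma integral_g_pos (hM : ZeroReturnsModel μ m v g ε) (hh : h ≤ m) :
    0 < ∫ s in Ioc (0 : ℝ) 1, g h s := by
  refine (hM.g_aeContinuous h hh).integral_pos h (B := 1) (fun n t ht htn => ?_) (hM.g_pos h hh)
  have hmem := natCast_div_mem_Ioc (Nat.zero_lt_of_lt ht) htn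
  rw [abs_of_pos (hM.g_pos h hh _ hmem)]
  exact hM.g_grid_le_one hh ht htn

lemma integral_v_sq_mul_g_pos (hM : ZeroReturnsModel μ m v g ε) (hh : h ≤ m) :
    0 < ∫ s in Ioc (0 : ℝ) 1, v s ^ 2 * g h s := by
  obtain ⟨B, -, hvB⟩ := hM.exists_v_sq_le
  have hpos (s : ℝ) (hs : s ∈ Ioc (0 : ℝ) 1) : 0 < v s ^ 2 * g h s :=
    mul_pos (sq_pos_of_ne_zero (hM.v_ne_zero s hs)) (hM.g_pos h hh s hs)
  refine (hM.v_sq_mul_g_aeContinuous hh).integral_pos h (B := B) (fun n t ht htn => ?_) hpos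
  have hmem := natCast_div_mem_Ioc (Nat.zero_lt_of_lt ht) htn
  rw [abs_of_pos (hpos _ hmem)]
  exact (mul_le_of_le_one_right (sq_nonneg _) (hM.g_grid_le_one hh ht htn)).trans (hvB _ hmem)

lemma unifIntegrable_rproc_sq (hM : ZeroReturnsModel μ m v g ε) :
    UnifIntegrableArray μ 0 fun n t ω => rproc v ε n t ω ^ 2 := by
  obtain ⟨B, hB, hvB⟩ := hM.exists_v_sq_le
  simpa only [rproc, mul_pow] using hM.unifIntegrable_sq.coeff_mul
    (c := fun n t => v ((t : ℝ) / n) ^ 2) hB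
    fun n t ht htn => ⟨sq_nonneg _, hvB _ (natCast_div_mem_Ioc ht htn)⟩

lemma tendstoInMeasure_trimmedAverage_jointIndicator (hM : ZeroReturnsModel μ m v g ε)
    (hh : h ≤ m) :
    TendstoInMeasure μ (fun n ω => trimmedAverage h n fun t => jointIndicator v ε n h t ω) atTop
      fun _ => ∫ s in Ioc (0 : ℝ) 1, g h s :=
  tendstoInMeasure_trimmedAverage hM.measurable_eps hM.summable_alphaMix
    (.of_mem_Icc zero_le_one (fun n t _ _ => measurable_jointIndicator v hM.measurable_eps n h t)
      fun n t _ _ => jointIndicator_mem_Icc v ε n h t)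
    (fun n t _ _ => isWindowStat_jointIndicator v ε n h t)
    ((hM.g_aeContinuous h hh).tendsto_of_eq_ceil fun _ _ => hM.integral_jointIndicator_eq hh)

lemma tendstoInMeasure_trimmedAverage_mul_rproc_sq (hM : ZeroReturnsModel μ m v g ε) {k : ℕ}
    {c : ℝ → ℝ} (hc : AEContinuous01 c)
    (hc01 : ∀ n t : ℕ, k < t → t ≤ n → c ((t : ℝ) / n) ∈ Icc (0 : ℝ) 1) :
    TendstoInMeasure μ
      (fun n ω => trimmedAverage k n fun t => c ((t : ℝ) / n) * rproc v ε n t ω ^ 2) atTop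
      fun _ => ∫ s in Ioc (0 : ℝ) 1, c s * (v s ^ 2 * g 0 s) := by
  have hwin (n t : ℕ) : IsWindowStat ε n 0 t fun ω => c ((t : ℝ) / n) * rproc v ε n t ω ^ 2 :=
    (isWindowStat_rproc v ε n t).comp (f := fun x => c ((t : ℝ) / n) * x ^ 2) (by fun_prop)
  have hint : UnifIntegrableArray μ k fun n t ω => c ((t : ℝ) / n) * rproc v ε n t ω ^ 2 :=
    (hM.unifIntegrable_rproc_sq.mono k.zero_le).coeff_mul (c := fun n t => c ((t : ℝ) / n))
      zero_le_one hc01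
  have hlim : AEContinuous01 fun s => c s * (v s ^ 2 * g 0 s) := by
    filter_upwards [hc, hM.v_sq_mul_g_aeContinuous m.zero_le] with u hcu hvgu
    exact hcu.mul hvgu
  refine tendstoInMeasure_trimmedAverage hM.measurable_eps hM.summable_alphaMix hint
    (fun n t _ _ => hwin n t) (hlim.tendsto_of_eq_ceil (k := k)
      (x := fun n t => ∫ ω, c ((t : ℝ) / n) * rproc v ε n t ω ^ 2 ∂μ) fun n t ht htn => ?_)
  rw [integral_const_mul, hM.integral_rproc_sq (Nat.zero_lt_of_lt ht) htn]

lemma tendstoInMeasure_trimmedAverage_rproc_sq (hM : ZeroReturnsModel μ m v g ε) :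
    TendstoInMeasure μ (fun n ω => trimmedAverage 0 n fun t => rproc v ε n t ω ^ 2) atTop
      fun _ => ∫ s in Ioc (0 : ℝ) 1, v s ^ 2 * g 0 s := by
  simpa only [one_mul] using hM.tendstoInMeasure_trimmedAverage_mul_rproc_sq (k := 0)
    (c := fun _ => 1) (ae_of_all _ fun _ => continuousAt_const)
    fun _ _ _ _ => right_mem_Icc.2 zero_le_one

section Kernel

variable {u : ℝ} {s : ℕ → ℕ}

lemma tendstoInMeasure_phat2 (hM : ZeroReturnsModel μ m v g ε) (hKb : KernelBandwidth K b)
    (hh : h ≤ m) (hu : u ∈ Ioo (0 : ℝ) 1) (hs : Tendsto (fun n => (s n : ℝ) / n) atTop (nhds u))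
    (hg : ContinuousAt (g h) u) :
    TendstoInMeasure μ (fun n => phat2 v ε K b n h (s n)) atTop fun _ => g h u :=
  hKb.tendstoInMeasure_sum_wgt_mul hu hs hM.measurable_eps hM.summable_alphaMix zero_le_one
    (fun n j _ _ => isWindowStat_jointIndicator v ε n h j)
    (fun n j _ _ => jointIndicator_mem_Icc v ε n h j) hg
    fun _ _ => hM.integral_jointIndicator_eq hh

lemma tendstoInMeasure_phatRatio (hM : ZeroReturnsModel μ m v g ε) (hKb : KernelBandwidth K b)
    (hh : h ≤ m) (hu : u ∈ Ioo (0 : ℝ) 1) (hs : Tendsto (fun n => (s n : ℝ) / n) atTop (nhds u))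
    (hgh : ContinuousAt (g h) u) (hg0 : ContinuousAt (g 0) u) :
    TendstoInMeasure μ (fun n => phatRatio v ε K b n h (s n)) atTop fun _ => g h u / g 0 u := by
  have hphat := hM.tendstoInMeasure_phat2 hKb m.zero_le hu hs hg0
  simp only [phat2_zero] at hphat
  exact tendstoInMeasure_div (hM.g_pos 0 m.zero_le u (Ioo_subset_Ioc_self hu)).ne'
    (hM.tendstoInMeasure_phat2 hKb hh hu hs hgh) hphat

lemma tendstoInMeasure_trimmedAverage_phatRatio_sub (hM : ZeroReturnsModel μ m v g ε)
    (hKb : KernelBandwidth K b) (hh : h ≤ m) :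
    TendstoInMeasure μ (fun n ω => trimmedAverage h n fun t => rproc v ε n t ω ^ 2 *
      (phatRatio v ε K b n h t ω - g h ((t : ℝ) / n) / g 0 ((t : ℝ) / n))) atTop
      fun _ => (0 : ℝ) := by
  refine tendstoInMeasure_trimmedAverage_mul_zero (hM.unifIntegrable_rproc_sq.mono h.zero_le)
    zero_le_one (fun n t => (measurable_phatRatio v hM.measurable_eps K b n h t).sub_const _)
    (fun n t ht htn ω => ?_) ?_
  · obtain ⟨hlo, hhi⟩ := phatRatio_mem_Icc v ε hKb.nonneg b n h t ω
    obtain ⟨hglo, hghi⟩ := hM.g_ratio_mem_Icc hh ht htn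
    exact abs_sub_le_of_nonneg_of_le hlo hhi hglo hghi
  · filter_upwards [hM.g_aeContinuous h hh, hM.g_aeContinuous 0 m.zero_le,
      (hM.g_ratio_aeContinuous hh).tendsto_ceil, ae_restrict_mem measurableSet_Ioc,
      ae_restrict_of_ae (Measure.ae_ne volume 1)] with u hgh hg0 hratio hu hu1
    simpa only [sub_self] using tendstoInMeasure_sub
      (hM.tendstoInMeasure_phatRatio hKb hh ⟨hu.1, hu.2.lt_of_ne hu1⟩
        (tendsto_ceil_mul_div hu.1.le) hgh hg0) (tendstoInMeasure_of_tendsto hratio)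

lemma tendstoInMeasure_gammaAr2 (hM : ZeroReturnsModel μ m v g ε) (hKb : KernelBandwidth K b)
    (hh : h ≤ m) :
    TendstoInMeasure μ (fun n => gammaAr2 v ε K b n h) atTop
      fun _ => ∫ s in Ioc (0 : ℝ) 1, v s ^ 2 * g h s := by
  have hsum := tendstoInMeasure_add (hM.tendstoInMeasure_trimmedAverage_phatRatio_sub hKb hh)
    (hM.tendstoInMeasure_trimmedAverage_mul_rproc_sq (hM.g_ratio_aeContinuous hh)
      fun n t => hM.g_ratio_mem_Icc hh)
  refine hsum.congr (fun n => ae_of_all _ fun ω => ?_) (ae_of_all _ fun _ => ?_)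
  · simp only [gammaAr2_eq_trimmedAverage, ← trimmedAverage_add]
    congr 1 with t
    ring
  · simp only [zero_add]
    refine setIntegral_congr_fun measurableSet_Ioc fun s hs => ?_
    have hg0 := (hM.g_pos 0 m.zero_le s hs).ne'
    field_simp

lemma tendstoInMeasure_DeltaHat (hM : ZeroReturnsModel μ m v g ε) (hKb : KernelBandwidth K b)
    (hh : h ≤ m) :
    TendstoInMeasure μ (fun n => DeltaHat v ε K b n h) atTop fun _ => Delta v g h := by
  have hvpr := tendstoInMeasure_div (hM.integral_v_sq_mul_g_pos hh).ne'
    hM.tendstoInMeasure_trimmedAverage_rproc_sq (hM.tendstoInMeasure_gammaAr2 hKb hh)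
  have hpr := tendstoInMeasure_div (hM.integral_g_pos hh).ne'
    (hM.tendstoInMeasure_trimmedAverage_jointIndicator m.zero_le)
    (hM.tendstoInMeasure_trimmedAverage_jointIndicator hh)
  exact (tendstoInMeasure_sub hvpr hpr).congr_left fun n => ae_of_all _ fun ω =>
    (DeltaHat_eq_trimmedAverage v ε K b n h ω).symm

end Kernel

end ZeroReturnsModel

theorem stmt13_general [IsProbabilityMeasure μ] {m : ℕ} {g : ℕ → ℝ → ℝ}
    (hM : ZeroReturnsModel μ m v g ε) (hKb : KernelBandwidth K b)
    (hΔ : ∃ h, 1 ≤ h ∧ h ≤ m ∧ Delta v g h ≠ 0) :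
    0 < ∑ h ∈ Finset.Icc 1 m, Delta v g h ^ 2 ∧
      TendstoInMeasure μ (fun n ω => ∑ h ∈ Finset.Icc 1 m, DeltaHat v ε K b n h ω ^ 2) atTop
        fun _ => ∑ h ∈ Finset.Icc 1 m, Delta v g h ^ 2 := by
  obtain ⟨h, h1, hm, hne⟩ := hΔ
  refine ⟨Finset.sum_pos' (fun _ _ => sq_nonneg _)
    ⟨h, Finset.mem_Icc.2 ⟨h1, hm⟩, sq_pos_of_ne_zero hne⟩, ?_⟩
  exact tendstoInMeasure_finsetSum _ fun k hk =>
    tendstoInMeasure_comp_of_continuousAt (f := fun x : ℝ => x ^ 2)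
      (hM.tendstoInMeasure_DeltaHat hKb (Finset.mem_Icc.1 hk).2) (continuous_pow 2).continuousAt

end ZeroReturns

/-- Under the non-stationary zero-returns model with mixing and the
kernel/bandwidth assumption, if `Δ_h ≠ 0` for some `h ∈ {1,…,m}` then the index
`κ̂_m = Σ_{h=1}^m Δ̂_h²` converges in probability to the strictly positive constant
`C = Σ_{h=1}^m Δ_h² > 0`. -/
theorem stmt13 {Ω : Type*} [MeasurableSpace Ω] (μ : Measure Ω) [IsProbabilityMeasure μ]
    (m : ℕ) (v : ℝ → ℝ) (g : ℕ → ℝ → ℝ) (c : ℝ) (ε : ℕ → ℕ → Ω → ℝ) (ν μ2 : ℝ)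
    (K : ℝ → ℝ) (R : ℝ) (b : ℕ → ℝ)
    -- deterministic variance function `v`
    (hc : 0 < c)
    (hv_pos : ∀ s ∈ Set.Ioc (0 : ℝ) 1, 0 < v s)
    (hv_bdd : ∃ M, ∀ s ∈ Set.Ioc (0 : ℝ) 1, |v s| ≤ M)
    (hv_lip : PiecewiseLipschitzOn01 v)
    (hv_ext : ∃ L, Tendsto v (nhdsWithin 0 (Set.Ioi 0)) (nhds L) ∧ ∀ u ≤ (0 : ℝ), v u = L)
    -- deterministic zero-returns probability functions `g_h`, `h = 0,…,m`
    (hg_bnd : ∀ h ≤ m, ∀ s ∈ Set.Ioc (0 : ℝ) 1, c < g h s ∧ g h s ≤ 1)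
    (hg_lip : ∀ h ≤ m, PiecewiseLipschitzOn01 (g h))
    (hg_ext : ∀ h ≤ m, ∃ L, Tendsto (g h) (nhdsWithin 0 (Set.Ioi 0)) (nhds L) ∧
      ∀ u ≤ (0 : ℝ), g h u = L)
    -- the innovations are measurable and `P(a_t a_{t-h} = 1) = g_h(t/n)`
    (hε_meas : ∀ n t, Measurable (ε n t))
    (hprob : ∀ h ≤ m, ∀ n t : ℕ, h < t → t ≤ n →
      (μ {ω | aproc v ε n t ω * aproc v ε n (t - h) ω = 1}).toReal = g h ((t : ℝ) / n))
    -- identifiability: `E(ε_t | a_t = 1) = 0` and `E(ε_t² | a_t = 1) = 1`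
    (hident1 : ∀ n t : ℕ, 1 ≤ t → t ≤ n →
      ∫ ω, ε n t ω ∂(μ[|{ω | aproc v ε n t ω = 1}]) = 0)
    (hident2 : ∀ n t : ℕ, 1 ≤ t → t ≤ n →
      ∫ ω, (ε n t ω) ^ 2 ∂(μ[|{ω | aproc v ε n t ω = 1}]) = 1)
    -- conditional strict stationarity
    (hstat : ∀ n k t h : ℕ,
      (μ[|{ω | (∀ i ≤ k, aproc v ε n (t + i) ω = 1) ∧
          ∀ i ≤ k, aproc v ε n (t + h + i) ω = 1}]).map
        (fun ω => fun i : Fin (k + 1) => ε n (t + (i : ℕ)) ω)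
      = (μ[|{ω | (∀ i ≤ k, aproc v ε n (t + i) ω = 1) ∧
          ∀ i ≤ k, aproc v ε n (t + h + i) ω = 1}]).map
        (fun ω => fun i : Fin (k + 1) => ε n (t + h + (i : ℕ)) ω))
    -- strong mixing and moment conditions
    (hν : 0 < ν) (hμ2a : 1 ≤ μ2) (hμ2b : μ2 < 1 + ν) (hμ2c : 1 + ν < 2 * μ2)
    (hmix : Summable (fun h : ℕ => alphaMix μ ε h ^ (1 - 1 / (2 * μ2))))
    (hmom : ∃ M : ℝ, ∀ n t : ℕ, 1 ≤ t → t ≤ n →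
      ∫⁻ ω, ENNReal.ofReal (|ε n t ω| ^ (2 + 2 * ν)) ∂μ ≤ ENNReal.ofReal M)
    -- kernel and bandwidth assumption
    (hK_cont : Continuous K) (hK_supp : HasCompactSupport K)
    (hK_nonneg : ∀ z, 0 ≤ K z) (hK_le : ∀ z, K z ≤ R)
    (hK_int : ∫ z : ℝ, K z = 1)
    (hb_pos : ∀ n, 0 < b n)
    (hb0 : Tendsto b atTop (nhds 0))
    (hnb : Tendsto (fun n : ℕ => 1 / ((n : ℝ) * (b n) ^ 2)) atTop (nhds 0))
    (hΔ : ∃ h : ℕ, 1 ≤ h ∧ h ≤ m ∧ Delta v g h ≠ 0) :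
    (0 < ∑ h ∈ Finset.Icc 1 m, (Delta v g h) ^ 2) ∧
    TendstoInMeasure μ
      (fun n : ℕ => fun ω => ∑ h ∈ Finset.Icc 1 m, (DeltaHat v ε K b n h ω) ^ 2) atTop
      (fun _ => ∑ h ∈ Finset.Icc 1 m, (Delta v g h) ^ 2) := by
  obtain ⟨M, hM⟩ := hmom
  have hμ2 : 1 - 1 / (2 * μ2) ≤ 1 := sub_le_self _ (by positivity)
  have hmodel : ZeroReturnsModel μ m v g ε :=
    { v_ne_zero := fun s hs => (hv_pos s hs).ne'
      v_bounded := hv_bdd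
      v_aeContinuous := hv_lip.aeContinuous01
      g_pos := fun h hh s hs => hc.trans (hg_bnd h hh s hs).1
      g_aeContinuous := fun h hh => (hg_lip h hh).aeContinuous01
      measurable_eps := hε_meas
      prob_jointIndicator := hprob
      cond_second_moment := hident2
      unifIntegrable_sq := unifIntegrableArray_sq_of_moment hε_meas hν hM
      summable_alphaMix := summable_alphaMix_of_rpow μ ε hμ2 hmix }
  exact stmt13_general hmodel
    (.of_integral_ne_zero hK_cont hK_supp hK_nonneg (hK_int ▸ one_ne_zero) hb_pos hb0 hnb) hΔ

end ZeroReturnsNS
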